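/- Under the inductive hypothesis of the μ-case, the game values of the unfolded game are fixed points: Let ⟨P, {→a}_{a∈L}⟩ be a PLTS, and let G₁ be a pLμ formula and X a variable such that μX.G₁ is in normal form. Assume that for every interpretation ρ' : Var → (P → [0,1]) and every q ∈ P, ⟦G₁⟧ρ'(q) = Val↓(𝒢^{G₁}_{ρ'})(⟨q,G₁⟩) = Val↑(𝒢^{G₁}_{ρ'})(⟨q,G₁⟩). For ⋆ ∈ {↓,↑} define ⦅μX.G₁⦆⋆_ρ : P → [0,1] by p ↦ Val⋆(𝒢^{μX.G₁}_ρ)(⟨p,G₁⟩). Then for every interpretation ρ, both ⦅μX.G₁⦆↓_ρ and ⦅μX.G₁⦆↑_ρ are fixed points of the map f ↦ ⟦G₁⟧ρ[f/X] on P → [0,1]; consequently ⟦μX.G₁⟧ρ(p) ≤ ⦅μX.G₁⦆↓_ρ(p) ≤ ⦅μX.G₁⦆↑_ρ(p) for every p ∈ P. -/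

import Mathlib

noncomputable section

open scoped unitInterval Classical

instance : Fact ((0:ℝ) ≤ 1) := ⟨zero_le_one⟩

/-- A discrete probability distribution on `X`: a `[0,1]`-valued (indeed nonnegative)
function summing to `1` (hence with countable support). -/
structure PDist (X : Type) where
  f : X → ℝ
  nonneg : ∀ x, 0 ≤ f x
  sum_one : HasSum f 1

/-- A probabilistic labeled transition system over labels `L` with states `P`:
for each label `a` and state `p`, the set of distributions `d` with `p →a d`. -/
structure PLTS (L P : Type) where
  trans : L → P → Set (PDist P)

/-- Formulas of the probabilistic modal μ-calculus, with variables drawn from `ℕ`. -/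
inductive pLmu (L : Type) : Type
  | var : ℕ → pLmu L
  | dia : L → pLmu L → pLmu L
  | box : L → pLmu L → pLmu L
  | or  : pLmu L → pLmu L → pLmu L
  | and : pLmu L → pLmu L → pLmu L
  | mu  : ℕ → pLmu L → pLmu L
  | nu  : ℕ → pLmu L → pLmu L

namespace pLmu

variable {L P : Type}

/-- free variables -/
def freeVars : pLmu L → Set ℕ
  | .var X => {X}
  | .dia _ G => freeVars G
  | .box _ G => freeVars G
  | .or G H => freeVars G ∪ freeVars H
  | .and G H => freeVars G ∪ freeVars H
  | .mu X G => freeVars G \ {X}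
  | .nu X G => freeVars G \ {X}

/-- the list of variables bound by the μ- and ν-binders occurring in a formula -/
def binders : pLmu L → List ℕ
  | .var _ => []
  | .dia _ G => binders G
  | .box _ G => binders G
  | .or G H => binders G ++ binders H
  | .and G H => binders G ++ binders H
  | .mu X G => X :: binders G
  | .nu X G => X :: binders G

/-- A formula is in normal form if every binder binds a distinct variable and no
variable occurs both free and bound. -/
def NormalForm (F : pLmu L) : Prop :=
  F.binders.Nodup ∧ ∀ X ∈ F.binders, X ∉ F.freeVars

/-- A formula is closed if it has no free variables. -/
def Closed (F : pLmu L) : Prop := F.freeVars = ∅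

/-- The expected value of `g : P → [0,1]` under a distribution `d` on `P`
(the real number `∑ q, d(q) · g(q)`, which lies in `[0,1]`, viewed in `[0,1]`). -/
def distExp (d : PDist P) (g : P → unitInterval) : unitInterval :=
  Set.projIcc 0 1 zero_le_one (∑' q, d.f q * (g q : ℝ))

/-- The denotational semantics `⟦F⟧ρ : P → [0,1]` of a pLμ formula, where least
(resp. greatest) fixed points are given, à la Knaster–Tarski, as the infimum of
prefixed points (resp. supremum of postfixed points) in the complete lattice `P → [0,1]`. -/
def sem (M : PLTS L P) : pLmu L → (ℕ → P → unitInterval) → P → unitInterval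
  | .var X, ρ, p => ρ X p
  | .dia a G, ρ, p => sSup ((fun d => distExp d (sem M G ρ)) '' M.trans a p)
  | .box a G, ρ, p => sInf ((fun d => distExp d (sem M G ρ)) '' M.trans a p)
  | .or G H, ρ, p => sem M G ρ p ⊔ sem M H ρ p
  | .and G H, ρ, p => sem M G ρ p ⊓ sem M H ρ p
  | .mu X G, ρ, p => sInf {g : P → unitInterval | sem M G (Function.update ρ X g) ≤ g} p
  | .nu X G, ρ, p => sSup {g : P → unitInterval | g ≤ sem M G (Function.update ρ X g)} p

end pLmu

noncomputable section

open scoped unitInterval Classical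

/-- The three agents of a 2½-player game. -/
inductive Player : Type
  | one : Player
  | two : Player
  | nature : Player
deriving DecidableEq

/-- A 2½-player arena: a directed graph `(S, E)`, an assignment of states to the
players (Player 1, Player 2, Nature), and probabilistic transition data at Nature
states. -/
structure Arena (S : Type) where
  E : S → Set S
  owner : S → Player
  prob : S → S → ℝ

namespace Arena

variable {S : Type}

/-- Well-formedness: at every Nature state `s`, `prob s` is a probability
distribution whose support is exactly the set `E s` of successors of `s`. -/
def Wellformed (A : Arena S) : Prop :=
  ∀ s, A.owner s = Player.nature →
    (∀ t, 0 ≤ A.prob s t) ∧ HasSum (A.prob s) 1 ∧ A.E s = Function.support (A.prob s)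

/-- `s` is a terminal state if it has no successors. -/
def Terminal (A : Arena S) (s : S) : Prop := A.E s = ∅

end Arena

/-- An (unbounded memory deterministic) strategy for player `pl` in arena `A`:
given the history `hist` and the current state `s` (a non-terminal state owned by
`pl`), it picks a successor of `s`. -/
structure Strategy {S : Type} (A : Arena S) (pl : Player) where
  next : List S → S → S
  valid : ∀ (hist : List S) (s : S), A.owner s = pl → A.E s ≠ ∅ → next hist s ∈ A.E s

variable {S : Type}

/-- The Markov chain determined by a strategy profile `(σ1, σ2)` and initial state
`s0`: the tree of finite paths from `s0` in which nodes ending in a Player 1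
(resp. Player 2) state are extended uniquely according to `σ1` (resp. `σ2`), nodes
ending in a Nature state branch fully over the successors, and (for the purpose of
encoding finite completed paths as infinite sequences) nodes ending in a terminal
state are extended by repeating the terminal state. -/
inductive MC (A : Arena S) (σ1 : Strategy A Player.one) (σ2 : Strategy A Player.two)
    (s0 : S) : List S → Prop
  | root : MC A σ1 σ2 s0 [s0]
  | one (l : List S) (s : S) : MC A σ1 σ2 s0 (l ++ [s]) → A.owner s = Player.one →
      A.E s ≠ ∅ → MC A σ1 σ2 s0 (l ++ [s, σ1.next l s])
  | two (l : List S) (s : S) : MC A σ1 σ2 s0 (l ++ [s]) → A.owner s = Player.two →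
      A.E s ≠ ∅ → MC A σ1 σ2 s0 (l ++ [s, σ2.next l s])
  | nature (l : List S) (s t : S) : MC A σ1 σ2 s0 (l ++ [s]) →
      A.owner s = Player.nature → t ∈ A.E s → MC A σ1 σ2 s0 (l ++ [s, t])
  | term (l : List S) (s : S) : MC A σ1 σ2 s0 (l ++ [s]) → A.E s = ∅ →
      MC A σ1 σ2 s0 (l ++ [s, s])

/-- The space of completed paths, encoded as infinite sequences of states
(a finite completed path, i.e. one ending in a terminal state, is encoded by
repeating its terminal state forever). -/
def PathSpace (S : Type) : Type := ℕ → S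

instance : MeasurableSpace (PathSpace S) :=
  @MeasurableSpace.pi ℕ (fun _ => S) (fun _ => ⊤)

/-- The basic cylinder set of completed paths extending a finite path. -/
def cyl (l : List S) : Set (PathSpace S) :=
  {u | ∀ i : Fin l.length, u i = l.get i}

/-- the probability of a single step -/
def stepProb (A : Arena S) (s t : S) : ℝ :=
  if A.owner s = Player.nature then A.prob s t else 1

/-- The product of the probabilities of the Nature steps along a finite path. -/
def pathProb (A : Arena S) : List S → ℝ
  | [] => 1
  | [_] => 1
  | s :: t :: l => stepProb A s t * pathProb A (t :: l)

/-- The weight assigned to a basic cylinder: the product of the probabilities of its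
Nature steps if the underlying finite path belongs to the Markov chain, `0` otherwise. -/
def cylWeight (A : Arena S) (σ1 : Strategy A Player.one) (σ2 : Strategy A Player.two)
    (s0 : S) (l : List S) : ℝ :=
  if MC A σ1 σ2 s0 l then pathProb A l else 0

/-- The Borel probability measure on completed paths induced by the Markov chain
`M^{s0}_{σ1,σ2}`: the unique probability measure assigning to every basic cylinder
its weight. -/
def pathMeasure (A : Arena S) (σ1 : Strategy A Player.one) (σ2 : Strategy A Player.two)
    (s0 : S) : MeasureTheory.Measure (PathSpace S) :=
  if h : ∃ μ : MeasureTheory.Measure (PathSpace S), MeasureTheory.IsProbabilityMeasure μ ∧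
      ∀ l : List S, l ≠ [] → μ (cyl l) = ENNReal.ofReal (cylWeight A σ1 σ2 s0 l)
  then h.choose else 0

/-- The payoff function induced by a parity structure `(pri, R)`: a completed path
reaching a terminal state gets the reward `R` of (the first occurrence of) that
terminal state; an infinite path gets `1` if the greatest priority occurring
infinitely often along it is even, and `0` otherwise. -/
def payoff (A : Arena S) (pri : S → ℕ) (R : S → ℝ) (u : PathSpace S) : ℝ :=
  if h : ∃ i, A.E (u i) = ∅ then R (u (Nat.find h))
  else if Even (sSup {n | {i | pri (u i) = n}.Infinite}) then 1 else 0

/-- The expected reward of Player 1 for the Markov chain `M^{s0}_{σ1,σ2}`: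
the integral of the payoff against the induced probability measure on paths. -/
def expReward (A : Arena S) (pri : S → ℕ) (R : S → ℝ) (σ1 : Strategy A Player.one)
    (σ2 : Strategy A Player.two) (s0 : S) : ℝ :=
  ∫ u, payoff A pri R u ∂(pathMeasure A σ1 σ2 s0)

/-- The lower value `Val↓` of the 2½-player parity game `⟨A, Φ_(pri,R)⟩`. -/
def lowerValue (A : Arena S) (pri : S → ℕ) (R : S → ℝ) (s : S) : ℝ :=
  ⨆ σ1 : Strategy A Player.one, ⨅ σ2 : Strategy A Player.two, expReward A pri R σ1 σ2 s

/-- The upper value `Val↑` of the 2½-player parity game `⟨A, Φ_(pri,R)⟩`. -/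
def upperValue (A : Arena S) (pri : S → ℕ) (R : S → ℝ) (s : S) : ℝ :=
  ⨅ σ2 : Strategy A Player.two, ⨆ σ1 : Strategy A Player.one, expReward A pri R σ1 σ2 s

/-- The Bellman functional `𝓕` on `S → ℝ` associated to the game `⟨A, Φ_(pri,R)⟩`. -/
def bellman (A : Arena S) (R : S → ℝ) (f : S → ℝ) : S → ℝ := fun s =>
  if A.E s = ∅ then R s
  else match A.owner s with
    | Player.one => sSup (f '' A.E s)
    | Player.two => sInf (f '' A.E s)
    | Player.nature => ∑' t : A.E s, A.prob s t * f t
namespace pLmu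

variable {L P : Type}

/-- the number of connectives of a formula -/
def size : pLmu L → ℕ
  | .var _ => 1
  | .dia _ G => size G + 1
  | .box _ G => size G + 1
  | .or G H => size G + size H + 1
  | .and G H => size G + size H + 1
  | .mu _ G => size G + 1
  | .nu _ G => size G + 1

/-- `varInfo F d X` looks up the (leftmost outermost) binder binding `X` in `F`,
returning `some (d', b)` where `d'` is the depth (starting from `d`) at which the
binder occurs and `b` is `true` for a μ-binder and `false` for a ν-binder, and
`none` if `X` is not bound in `F`. -/
def varInfo : pLmu L → ℕ → ℕ → Option (ℕ × Bool)
  | .var _, _, _ => none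
  | .dia _ G, d, X => varInfo G (d+1) X
  | .box _ G, d, X => varInfo G (d+1) X
  | .or G H, d, X => (varInfo G (d+1) X).orElse (fun _ => varInfo H (d+1) X)
  | .and G H, d, X => (varInfo G (d+1) X).orElse (fun _ => varInfo H (d+1) X)
  | .mu Y G, d, X => if Y = X then some (d, true) else varInfo G (d+1) X
  | .nu Y G, d, X => if Y = X then some (d, false) else varInfo G (d+1) X

/-- `bodyOf F X` is the body of the (leftmost outermost) binder binding `X` in `F`,
if any. -/
def bodyOf : pLmu L → ℕ → Option (pLmu L)
  | .var _, _ => none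
  | .dia _ G, X => bodyOf G X
  | .box _ G, X => bodyOf G X
  | .or G H, X => (bodyOf G X).orElse (fun _ => bodyOf H X)
  | .and G H, X => (bodyOf G X).orElse (fun _ => bodyOf H X)
  | .mu Y G, X => if Y = X then some G else bodyOf G X
  | .nu Y G, X => if Y = X then some G else bodyOf G X

end pLmu

/-- The states of the game `𝒢^F_ρ`: pairs of a process state or a distribution on
process states, and a (sub)formula. -/
abbrev GState (L P : Type) : Type := (P ⊕ PDist P) × pLmu L

/-- The arena of the 2½-player parity game `𝒢^F_ρ` associated to a PLTS `M`
and a formula `F`. -/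
def gameArena (M : PLTS L P) (F : pLmu L) : Arena (GState L P) where
  E := fun s =>
    match s with
    | (Sum.inl p, .var X) =>
        match pLmu.bodyOf F X with
        | some H => {((Sum.inl p : P ⊕ PDist P), H)}
        | none => ∅
    | (Sum.inl p, .dia a G) => (fun d => ((Sum.inr d : P ⊕ PDist P), G)) '' M.trans a p
    | (Sum.inl p, .box a G) => (fun d => ((Sum.inr d : P ⊕ PDist P), G)) '' M.trans a p
    | (Sum.inl p, .or G H) => {((Sum.inl p : P ⊕ PDist P), G), ((Sum.inl p : P ⊕ PDist P), H)}
    | (Sum.inl p, .and G H) => {((Sum.inl p : P ⊕ PDist P), G), ((Sum.inl p : P ⊕ PDist P), H)}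
    | (Sum.inl p, .mu _ G) => {((Sum.inl p : P ⊕ PDist P), G)}
    | (Sum.inl p, .nu _ G) => {((Sum.inl p : P ⊕ PDist P), G)}
    | (Sum.inr d, G) => (fun q => ((Sum.inl q : P ⊕ PDist P), G)) '' Function.support d.f
  owner := fun s =>
    match s with
    | (Sum.inl _, .var X) =>
        match pLmu.varInfo F 0 X with
        | some (_, true) => Player.one
        | some (_, false) => Player.two
        | none => Player.one
    | (Sum.inl _, .dia _ _) => Player.one
    | (Sum.inl _, .box _ _) => Player.two
    | (Sum.inl _, .or _ _) => Player.one
    | (Sum.inl _, .and _ _) => Player.two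
    | (Sum.inl _, .mu _ _) => Player.one
    | (Sum.inl _, .nu _ _) => Player.two
    | (Sum.inr _, _) => Player.nature
  prob := fun s t =>
    match s, t with
    | (Sum.inr d, G), (Sum.inl q, G') => if G' = G then d.f q else 0
    | _, _ => 0

/-- The priority assignment of the game `𝒢^F_ρ`: a state `⟨p, X⟩` with `X` bound
in `F` at binder depth `d` gets the positive priority `2(|F| - d) + 1` if `X` is a
μ-variable and `2(|F| - d)` if `X` is a ν-variable (so that μ-variables get odd and
ν-variables get even priorities, and variables subsuming others get greater
priorities); all other states get priority `0`. -/
def gamePri (F : pLmu L) : GState L P → ℕ := fun s =>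
  match s with
  | (Sum.inl _, .var X) =>
      match pLmu.varInfo F 0 X with
      | some (d, true) => 2 * (F.size - d) + 1
      | some (d, false) => 2 * (F.size - d)
      | none => 0
  | _ => 0

/-- The terminal reward assignment of the game `𝒢^F_ρ`: a terminal state `⟨p, X⟩`
(with `X` free in `F`) gets reward `ρ(X)(p)`; a terminal state `⟨p, ⟨a⟩G⟩` gets
reward `0` and a terminal state `⟨p, [a]G⟩` gets reward `1`. -/
def gameR (F : pLmu L) (ρ : ℕ → P → unitInterval) : GState L P → ℝ := fun s =>
  match s with
  | (Sum.inl p, .var X) => (ρ X p : ℝ)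
  | (Sum.inl _, .dia _ _) => 0
  | (Sum.inl _, .box _ _) => 1
  | _ => 0

/-!
Playing `𝒢^{μX.G₁}` until the first visit to a state `⟨q, X⟩` is playing `𝒢^{G₁}`, in which these
states are terminal. Making a set of states terminal, with the values of the original game as
rewards, does not change any value: a player who is `ε/2`-optimal in the modified game and switches
to an `ε/2`-optimal strategy of the original game at the first visit to the set is `ε`-optimal,
because, by the Markov property, the play after the first visit is again a play of the original
game. In `𝒢^{μX.G₁}` the state `⟨q, X⟩` has the value of its only successor `⟨q, G₁⟩`. Hence
`⦅μX.G₁⦆⋆_ρ` is the value function of `𝒢^{G₁}` under the interpretation that sends `X` to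
`⦅μX.G₁⦆⋆_ρ`, and by the inductive hypothesis this is the semantics of `G₁` there. The inequalities
follow since `⟦μX.G₁⟧ρ` is the least fixed point.
-/

/-! ### Path space -/

section PathSpace

/-- The finite path formed by the first `n` states of `u`. -/
def PathSpace.take (n : ℕ) (u : PathSpace S) : List S := List.ofFn fun i : Fin n => u i

/-- The path that remains of `u` after its first `n` states. -/
def PathSpace.drop (n : ℕ) (u : PathSpace S) : PathSpace S := fun i => u (n + i)

namespace PathSpace

@[simp]
theorem length_take (n : ℕ) (u : PathSpace S) : (take n u).length = n := List.length_ofFn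

theorem take_add (m n : ℕ) (u : PathSpace S) : take (m + n) u = take m u ++ take n (drop m u) :=
  List.ofFn_add

theorem take_one (u : PathSpace S) : take 1 u = [u 0] := List.ofFn_succ

theorem take_succ (n : ℕ) (u : PathSpace S) : take (n + 1) u = take n u ++ [u n] := by
  rw [take_add, take_one, drop, add_zero]

theorem mem_take {n : ℕ} {u : PathSpace S} {s : S} : s ∈ take n u ↔ ∃ i < n, u i = s := by
  simp only [take, List.mem_ofFn, Fin.exists_iff, exists_prop]

theorem measurableSet_setOf_coord_mem (n : ℕ) (T : Set S) :
    MeasurableSet {u : PathSpace S | u n ∈ T} :=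
  @measurable_pi_apply ℕ (fun _ => S) (fun _ => ⊤) n (t := T) trivial

theorem measurable_iff {α : Type*} [MeasurableSpace α] {f : α → PathSpace S} :
    Measurable f ↔ ∀ n, ∀ T : Set S, MeasurableSet {a | f a n ∈ T} :=
  (@measurable_pi_iff _ _ _ _ (fun _ => ⊤) _).trans
    (forall_congr' fun _ => ⟨fun h T => h (t := T) trivial, fun h T _ => h T⟩)

theorem measurable_drop (n : ℕ) : Measurable (drop n : PathSpace S → PathSpace S) :=
  measurable_iff.2 fun i T => measurableSet_setOf_coord_mem (n + i) T

end PathSpace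

open PathSpace

theorem mem_cyl_iff {l : List S} {u : PathSpace S} : u ∈ cyl l ↔ take l.length u = l := by
  conv_rhs => rhs; rw [← List.ofFn_get l]
  exact (List.ofFn_injective.eq_iff.trans funext_iff).symm

theorem mem_cyl_ofFn {n : ℕ} {f : Fin n → S} {u : PathSpace S} :
    u ∈ cyl (List.ofFn f) ↔ (fun i : Fin n => u i) = f := by
  rw [mem_cyl_iff, List.length_ofFn]
  exact List.ofFn_injective.eq_iff

theorem mem_cyl_take (n : ℕ) (u : PathSpace S) : u ∈ cyl (take n u) := mem_cyl_ofFn.2 rfl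

@[simp]
theorem cyl_nil : cyl ([] : List S) = Set.univ :=
  Set.eq_univ_of_forall fun u => mem_cyl_take 0 u

theorem cyl_append (h l : List S) : cyl (h ++ l) = cyl h ∩ drop h.length ⁻¹' cyl l := by
  ext u
  rw [Set.mem_inter_iff, Set.mem_preimage, mem_cyl_iff, mem_cyl_iff, mem_cyl_iff,
    List.length_append, take_add]
  exact ⟨fun e => List.append_inj e (length_take _ _), fun e => congrArg₂ _ e.1 e.2⟩

theorem mem_cyl_singleton {s : S} {u : PathSpace S} : u ∈ cyl [s] ↔ u 0 = s := by
  rw [mem_cyl_iff, List.length_singleton, take_one, List.singleton_inj]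

theorem mem_cyl_concat {l : List S} {s : S} {u : PathSpace S} :
    u ∈ cyl (l ++ [s]) ↔ u ∈ cyl l ∧ u l.length = s := by
  rw [cyl_append, Set.mem_inter_iff, Set.mem_preimage, mem_cyl_singleton]; rfl

theorem measurableSet_cyl (l : List S) : MeasurableSet (cyl l) := by
  have cyl_eq : cyl l = ⋂ i : Fin l.length, {u | u i ∈ ({l.get i} : Set S)} := by
    ext u; simp only [cyl, Set.mem_ofPred_eq, Set.mem_iInter, Set.mem_singleton_iff]
  rw [cyl_eq]
  exact MeasurableSet.iInter fun i => measurableSet_setOf_coord_mem i _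

theorem pairwise_disjoint_cyl_ofFn (n : ℕ) :
    Pairwise (Function.onFun Disjoint fun f : Fin n → S => cyl (List.ofFn f)) :=
  fun _ _ hne => Set.disjoint_left.2 fun _ hf hg =>
    hne ((mem_cyl_ofFn.1 hf).symm.trans (mem_cyl_ofFn.1 hg))

end PathSpace

/-! ### Tree weights -/

section TreeWeight

open MeasureTheory PathSpace
open scoped ENNReal

/-- Weights on finite paths that are the cylinder masses of a probability measure on the path
space: the root has weight `1`, and the weight of a node is the sum of those of its children. -/
structure IsTreeWeight (W : List S → ℝ≥0∞) : Prop where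
  nil : W [] = 1
  tsum_concat : ∀ l, ∑' s, W (l ++ [s]) = W l

namespace IsTreeWeight

variable {W : List S → ℝ≥0∞}

theorem concat_le (hW : IsTreeWeight W) (l : List S) (s : S) : W (l ++ [s]) ≤ W l :=
  (ENNReal.le_tsum s).trans (hW.tsum_concat l).le

theorem ne_top (hW : IsTreeWeight W) (l : List S) : W l ≠ ∞ := by
  induction l using List.reverseRecOn with
  | nil => rw [hW.nil]; exact ENNReal.one_ne_top
  | append_singleton l s ih => exact ne_top_of_le_ne_top ih (hW.concat_le l s)

theorem tsum_ofFn (hW : IsTreeWeight W) (n : ℕ) : ∑' f : Fin n → S, W (List.ofFn f) = 1 := by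
  induction n with
  | zero => rw [tsum_fintype, Fintype.sum_unique, List.ofFn_zero, hW.nil]
  | succ n ih =>
    have concat (s : S) (f : Fin n → S) :
        List.ofFn (Fin.snocEquiv (fun _ => S) (s, f)) = List.ofFn f ++ [s] := by
      simp only [List.ofFn_succ', Fin.snocEquiv_apply, Fin.snoc_castSucc, Fin.snoc_last,
        List.concat_eq_append]
    calc ∑' f : Fin (n + 1) → S, W (List.ofFn f)
        = ∑' s, ∑' f : Fin n → S, W (List.ofFn f ++ [s]) := by
          rw [← (Fin.snocEquiv fun _ => S).tsum_eq, ENNReal.tsum_prod']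
          simp only [concat]
      _ = ∑' f : Fin n → S, W (List.ofFn f) := by
          rw [ENNReal.tsum_comm]
          exact tsum_congr fun f => hW.tsum_concat _
      _ = 1 := ih

theorem countable_support_ofFn (hW : IsTreeWeight W) (n : ℕ) :
    (Function.support fun f : Fin n → S => W (List.ofFn f)).Countable :=
  Summable.countable_support_ennreal (by rw [hW.tsum_ofFn]; exact ENNReal.one_ne_top)

theorem countable_support (hW : IsTreeWeight W) : (Function.support W).Countable := by
  refine Set.Countable.mono (fun l hl => ?_)
    (Set.countable_iUnion fun n => (hW.countable_support_ofFn n).image List.ofFn)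
  refine Set.mem_iUnion.2 ⟨l.length, l.get, ?_, List.ofFn_get l⟩
  rwa [Function.mem_support, List.ofFn_get]

variable {μ ν : Measure (PathSpace S)} [IsProbabilityMeasure μ] [IsProbabilityMeasure ν]

theorem ae_take_ne_zero (hW : IsTreeWeight W) (hμ : ∀ l, μ (cyl l) = W l) :
    ∀ᵐ u ∂μ, ∀ n, W (take n u) ≠ 0 := by
  refine ae_all_iff.2 fun n => ?_
  set D := Function.support fun f : Fin n → S => W (List.ofFn f)
  have hD : D.Countable := hW.countable_support_ofFn n
  have measure_union : μ (⋃ f ∈ D, cyl (List.ofFn f)) = 1 := by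
    rw [measure_biUnion hD ((pairwise_disjoint_cyl_ofFn n).set_pairwise D)
      fun f _ => measurableSet_cyl _]
    simp only [hμ]
    rw [tsum_subtype D fun f => W (List.ofFn f), Set.indicator_support, hW.tsum_ofFn]
  have ae_mem : ∀ᵐ u ∂μ, u ∈ ⋃ f ∈ D, cyl (List.ofFn f) :=
    mem_ae_iff_prob_eq_one (.biUnion hD fun _ _ => measurableSet_cyl _) |>.2 measure_union
  filter_upwards [ae_mem] with u hu
  obtain ⟨f, hf, huf⟩ := Set.mem_iUnion₂.1 hu
  rwa [take, mem_cyl_ofFn.1 huf]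

theorem measure_eq_tsum_inter_cyl (hW : IsTreeWeight W) (hμ : ∀ l, μ (cyl l) = W l) (n : ℕ)
    {B : Set (PathSpace S)} (hB : MeasurableSet B) :
    μ B = ∑' f : Function.support fun f : Fin n → S => W (List.ofFn f),
      μ (B ∩ cyl (List.ofFn f.1)) := by
  rw [← measure_biUnion (hW.countable_support_ofFn n)
    (fun f _ g _ hne => (pairwise_disjoint_cyl_ofFn n hne).mono Set.inter_subset_right
      Set.inter_subset_right) fun f _ => hB.inter (measurableSet_cyl _), ← Set.inter_iUnion₂]
  refine measure_congr (Filter.eventuallyEq_set.2 ?_)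
  filter_upwards [hW.ae_take_ne_zero hμ] with u hu
  exact ⟨fun huB => ⟨huB, Set.mem_iUnion₂.2 ⟨_, hu n, mem_cyl_take n u⟩⟩, fun h => h.1⟩

theorem measure_ext (hW : IsTreeWeight W) (hμ : ∀ l, μ (cyl l) = W l)
    (hν : ∀ l, ν (cyl l) = W l) : μ = ν := by
  let _ : MeasurableSpace S := ⊤
  refine ext_of_generate_finite _ (generateFrom_measurableCylinders (α := fun _ : ℕ => S)).symm
    isPiSystem_measurableCylinders (fun B hB => ?_) (by rw [measure_univ, measure_univ])
  obtain ⟨J, C, hC, rfl⟩ := (mem_measurableCylinders B).1 hB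
  obtain ⟨n, hn⟩ := J.exists_nat_subset_range
  have hmeas : MeasurableSet (cylinder J C : Set (PathSpace S)) := hC.cylinder J
  refine (hW.measure_eq_tsum_inter_cyl hμ n hmeas).trans
    (Eq.trans ?_ (hW.measure_eq_tsum_inter_cyl hν n hmeas).symm)
  refine tsum_congr fun ⟨f, _⟩ => ?_
  have agree {u v : PathSpace S} (hu : u ∈ cyl (List.ofFn f)) (hv : v ∈ cyl (List.ofFn f)) :
      u ∈ (cylinder J C : Set (PathSpace S)) → v ∈ (cylinder J C : Set (PathSpace S)) := by
    have huv := (mem_cyl_ofFn.1 hu).trans (mem_cyl_ofFn.1 hv).symm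
    have restrict_eq : J.restrict u = J.restrict v :=
      funext fun i => congrFun huv ⟨i, Finset.mem_range.1 (hn i.2)⟩
    exact fun h => (mem_cylinder J C v).2 (restrict_eq ▸ (mem_cylinder J C u).1 h)
  obtain hempty | ⟨u, huB, hu⟩ :=
      (cylinder J C ∩ cyl (List.ofFn f) : Set (PathSpace S)).eq_empty_or_nonempty
  · rw [hempty, measure_empty, measure_empty]
  · rw [Set.inter_eq_right.2 fun v hv => agree hu hv huB, hμ, hν]

theorem measure_cyl_eq_of_le (hW : IsTreeWeight W) (hμ : ∀ l, W l ≤ μ (cyl l)) (l : List S) :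
    μ (cyl l) = W l := by
  refine ((hμ l).antisymm (not_lt.1 fun hlt => ?_)).symm
  have lt_tsum : 1 < ∑' f : Fin l.length → S, μ (cyl (List.ofFn f)) := by
    rw [← hW.tsum_ofFn l.length]
    refine ENNReal.tsum_lt_tsum (i := l.get) ?_ (fun f => hμ _) (by rwa [List.ofFn_get])
    rw [hW.tsum_ofFn]; exact ENNReal.one_ne_top
  refine lt_tsum.not_ge ((tsum_meas_le_meas_iUnion_of_disjoint μ
    (fun f => measurableSet_cyl _) (pairwise_disjoint_cyl_ofFn _)).trans prob_le_one)

end IsTreeWeight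

end TreeWeight

section TreeMeasure

open MeasureTheory ProbabilityTheory PathSpace
open scoped ENNReal

/-- The transition kernel, from histories up to time `n` to states at time `n + 1`, of the Markov
chain with transition probabilities `p`. -/
def markovKernel {α : Type*} [MeasurableSpace α] [DiscreteMeasurableSpace α] (p : α → PMF α)
    (n : ℕ) : Kernel (Finset.Iic n → α) α :=
  ⟨fun y => (p (y ⟨n, Finset.mem_Iic.2 le_rfl⟩)).toMeasure,
    (Measurable.of_discrete (f := fun b => (p b).toMeasure)).comp (measurable_pi_apply _)⟩

instance {α : Type*} [MeasurableSpace α] [DiscreteMeasurableSpace α] (p : α → PMF α) (n : ℕ) :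
    IsMarkovKernel (markovKernel p n) :=
  ⟨fun _ => PMF.toMeasure.isProbabilityMeasure _⟩

theorem forall_le_eq_iff_frestrictLe_eq {α : Type*} (x y : ℕ → α) (n : ℕ) :
    (∀ i ≤ n, x i = y i) ↔
      Preorder.frestrictLe (π := fun _ => α) n x = Preorder.frestrictLe n y :=
  ⟨fun h => funext fun i => h i (Finset.mem_Iic.1 i.2),
    fun h i hi => congrFun h ⟨i, Finset.mem_Iic.2 hi⟩⟩

theorem exists_measure_markovChain {α : Type*} [MeasurableSpace α] [DiscreteMeasurableSpace α]
    (p : α → PMF α) (a : α) :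
    ∃ μ : Measure (ℕ → α), IsProbabilityMeasure μ ∧ ∀ x : ℕ → α, x 0 = a →
      ∀ n, μ {ω | ∀ i ≤ n, ω i = x i} = ∏ i ∈ Finset.range n, p (x i) (x (i + 1)) := by
  let μ := Kernel.traj (X := fun _ => α) (markovKernel p) 0 fun _ => a
  let π (n : ℕ) : (ℕ → α) → (Finset.Iic n → α) := Preorder.frestrictLe (π := fun _ => α) n
  have measurable_π (n : ℕ) : Measurable (π n) := Preorder.measurable_frestrictLe n
  have map_π (x : ℕ → α) (n : ℕ) : μ {ω | ∀ i ≤ n, ω i = x i} = μ.map (π n) {π n x} := by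
    rw [Measure.map_apply (measurable_π n) (MeasurableSet.singleton _)]
    simp only [forall_le_eq_iff_frestrictLe_eq]; rfl
  refine ⟨μ, inferInstance, fun x hx n => ?_⟩
  induction n with
  | zero =>
    have start : π 0 x = fun _ => a :=
      funext fun i => (congrArg x (Nat.le_zero.1 (Finset.mem_Iic.1 i.2))).trans hx
    rw [map_π, Kernel.traj_map_frestrictLe_apply, Kernel.partialTraj_self, Kernel.id_apply, start,
      Measure.dirac_apply_of_mem (Set.mem_singleton _), Finset.prod_range_zero]
  | succ n ih =>
    have law : μ.map (π n) ⊗ₘ markovKernel p n = μ.map fun ω => (π n ω, ω (n + 1)) := by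
      rw [Kernel.traj_map_frestrictLe_apply, Kernel.partialTraj_compProd_eq_map_traj zero_le]
    calc μ {ω | ∀ i ≤ n + 1, ω i = x i}
        = μ.map (fun ω => (π n ω, ω (n + 1))) ({π n x} ×ˢ {x (n + 1)}) := by
          rw [Measure.map_apply ((measurable_π n).prodMk (measurable_pi_apply _))
            ((MeasurableSet.singleton _).prod (MeasurableSet.singleton _))]
          congr 1 with ω
          simp only [Nat.le_succ_iff_eq_or_le, or_imp, forall_and, forall_eq,
            forall_le_eq_iff_frestrictLe_eq]
          exact and_comm
      _ = p (x n) (x (n + 1)) * μ.map (π n) {π n x} := by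
          rw [← law, Measure.compProd_apply_prod (MeasurableSet.singleton _)
            (MeasurableSet.singleton _), lintegral_singleton]
          exact congrArg (· * _) (PMF.toMeasure_apply_singleton _ _ (MeasurableSet.singleton _))
      _ = _ := by rw [← map_π, ih, Finset.prod_range_succ, mul_comm]

/-- The law of the next history of a process with tree weight `W` that has followed the finite
path `l`. The value at paths of weight `0` is irrelevant. -/
def nextHistory (W : List S → ℝ≥0∞) (l : List S) : PMF (List S) :=
  if h : ∑' s, W (l ++ [s]) ≠ 0 ∧ ∑' s, W (l ++ [s]) ≠ ∞ then
    (PMF.normalize (fun s => W (l ++ [s])) h.1 h.2).map fun s => l ++ [s]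
  else PMF.pure l

namespace IsTreeWeight

variable {W : List S → ℝ≥0∞}

theorem mul_nextHistory_concat (hW : IsTreeWeight W) (l : List S) (s : S) :
    W l * nextHistory W l (l ++ [s]) = W (l ++ [s]) := by
  obtain h0 | h0 := eq_or_ne (W l) 0
  · rw [h0, zero_mul, eq_comm, ← nonpos_iff_eq_zero, ← h0]
    exact hW.concat_le l s
  have hsum : ∑' s, W (l ++ [s]) ≠ 0 ∧ ∑' s, W (l ++ [s]) ≠ ∞ := by
    rw [hW.tsum_concat]; exact ⟨h0, hW.ne_top l⟩
  rw [nextHistory, dif_pos hsum]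
  simp only [PMF.map_apply, List.append_cancel_left_eq, List.singleton_inj, eq_comm (a := s),
    tsum_ite_eq, PMF.normalize_apply, hW.tsum_concat]
  rw [mul_left_comm, ENNReal.mul_inv_cancel h0 (hW.ne_top l), mul_one]

theorem prod_nextHistory_take (hW : IsTreeWeight W) (l : List S) {n : ℕ} (hn : n ≤ l.length) :
    ∏ i ∈ Finset.range n, nextHistory W (l.take i) (l.take (i + 1)) = W (l.take n) := by
  induction n with
  | zero => rw [Finset.prod_range_zero, List.take_zero, hW.nil]
  | succ n ih =>
    rw [Finset.prod_range_succ, ih (Nat.le_of_succ_le hn), List.take_succ_eq_append_getElem hn,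
      hW.mul_nextHistory_concat]

theorem exists_measure (hW : IsTreeWeight W) :
    ∃ μ : Measure (PathSpace S), IsProbabilityMeasure μ ∧ ∀ l, μ (cyl l) = W l := by
  have : Nonempty S := by
    by_contra hS
    have := not_nonempty_iff.1 hS
    simpa only [tsum_empty, hW.nil, zero_ne_one] using hW.tsum_concat []
  let s₀ : S := Classical.arbitrary S
  let _ : MeasurableSpace (List S) := ⊤
  obtain ⟨μ, hμ, hμW⟩ := exists_measure_markovChain (nextHistory W) []
  let path (ω : ℕ → List S) : PathSpace S := fun n => (ω (n + 1)).getLastD s₀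
  have measurable_path : Measurable path := measurable_iff.2 fun n T =>
    measurable_pi_apply (X := fun _ => List S) (n + 1) (t := {l | l.getLastD s₀ ∈ T}) trivial
  have : IsProbabilityMeasure (μ.map path) :=
    Measure.isProbabilityMeasure_map measurable_path.aemeasurable
  refine ⟨μ.map path, this, hW.measure_cyl_eq_of_le fun l => ?_⟩
  rw [Measure.map_apply measurable_path (measurableSet_cyl l)]
  calc W l = μ {ω | ∀ i ≤ l.length, ω i = l.take i} := by
        rw [hμW (fun i => l.take i) List.take_zero, hW.prod_nextHistory_take l le_rfl,
          List.take_length]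
    _ ≤ μ (path ⁻¹' cyl l) := measure_mono fun ω hω i => by
        simp only [path]
        rw [hω _ i.2, List.take_succ_eq_append_getElem i.2, List.getLastD_concat,
          List.get_eq_getElem]

end IsTreeWeight

end TreeMeasure

/-! ### The measure of a Markov chain -/

section MarkovChain

open MeasureTheory
open scoped ENNReal

theorem Arena.Wellformed.E_ne_empty {A : Arena S} (hA : A.Wellformed) {s : S}
    (hs : A.owner s = Player.nature) : A.E s ≠ ∅ := fun hE => by
  obtain ⟨-, hsum, hsupp⟩ := hA s hs
  rw [Function.support_eq_empty_iff.1 (hsupp.symm.trans hE)] at hsum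
  exact one_ne_zero (hsum.unique hasSum_zero)

theorem list_concat_induction {p : List S → Prop} (nil : p []) (singleton : ∀ s, p [s])
    (concat : ∀ l s t, p (l ++ [s]) → p (l ++ [s, t])) (l : List S) : p l := by
  induction l using List.reverseRecOn with
  | nil => exact nil
  | append_singleton l t ih =>
    obtain rfl | ⟨l, s, rfl⟩ := l.eq_nil_or_concat'
    · exact singleton t
    · rw [List.append_assoc]; exact concat l s t ih

theorem append_pair_inj {l l' : List S} {s t s' t' : S} (h : l ++ [s, t] = l' ++ [s', t']) :
    l = l' ∧ s = s' ∧ t = t' := by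
  obtain ⟨hl, hst⟩ := List.append_inj' h rfl
  exact ⟨hl, by simpa only [List.cons.injEq, and_true] using hst⟩

theorem append_pair_ne_singleton {l : List S} {s t r : S} : l ++ [s, t] ≠ [r] := fun h => by
  have := congrArg List.length h
  simp only [List.length_append, List.length_cons, List.length_nil] at this
  omega

theorem pathProb_concat (A : Arena S) (l : List S) (s t : S) :
    pathProb A (l ++ [s, t]) = pathProb A (l ++ [s]) * stepProb A s t := by
  induction l with
  | nil => simp only [List.nil_append, pathProb, one_mul, mul_one]
  | cons a l ih =>
    cases l <;> simp_all only [List.cons_append, List.nil_append, pathProb, mul_assoc]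

/-- The probability that a play with history `l` and current state `s` moves to `t`; in the
encoding of completed paths by infinite sequences, terminal states loop. -/
def stepWeight (A : Arena S) (σ₁ : Strategy A Player.one) (σ₂ : Strategy A Player.two)
    (l : List S) (s t : S) : ℝ :=
  if A.E s = ∅ then if t = s then 1 else 0
  else match A.owner s with
    | Player.one => if t = σ₁.next l s then 1 else 0
    | Player.two => if t = σ₂.next l s then 1 else 0
    | Player.nature => A.prob s t

/-- The mass of the cylinder of a finite path under the measure of a Markov chain. Unlike
`cylWeight` it gives the empty path, whose cylinder is the whole space, the weight `1`. -/
def historyWeight (A : Arena S) (σ₁ : Strategy A Player.one) (σ₂ : Strategy A Player.two)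
    (s₀ : S) (l : List S) : ℝ≥0∞ :=
  if l = [] then 1 else ENNReal.ofReal (cylWeight A σ₁ σ₂ s₀ l)

variable {A : Arena S} {σ₁ : Strategy A Player.one} {σ₂ : Strategy A Player.two} {s₀ : S}

theorem mc_singleton_iff {s : S} : MC A σ₁ σ₂ s₀ [s] ↔ s = s₀ := by
  refine ⟨fun h => ?_, fun h => h ▸ MC.root⟩
  generalize hl : [s] = l at h
  cases h with
  | root => exact List.singleton_inj.1 hl
  | one | two | nature | term => exact absurd hl.symm append_pair_ne_singleton

theorem MC.of_concat (hA : A.Wellformed) {l : List S} {s t : S}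
    (h : MC A σ₁ σ₂ s₀ (l ++ [s, t])) :
    MC A σ₁ σ₂ s₀ (l ++ [s]) ∧ stepWeight A σ₁ σ₂ l s t ≠ 0 := by
  generalize hm : l ++ [s, t] = m at h
  cases h with
  | root => exact absurd hm append_pair_ne_singleton
  | one l s h ho hE | two l s h ho hE =>
    obtain ⟨rfl, rfl, rfl⟩ := append_pair_inj hm
    refine ⟨h, ?_⟩
    simp only [stepWeight, ho, hE, if_true, if_false]
    exact one_ne_zero
  | nature l s t h ho ht =>
    obtain ⟨rfl, rfl, rfl⟩ := append_pair_inj hm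
    refine ⟨h, ?_⟩
    rw [(hA _ ho).2.2, Function.mem_support] at ht
    simpa only [stepWeight, ho, hA.E_ne_empty ho, if_false] using ht
  | term l s h hE =>
    obtain ⟨rfl, rfl, rfl⟩ := append_pair_inj hm
    refine ⟨h, ?_⟩
    simp only [stepWeight, hE, if_true]
    exact one_ne_zero

theorem MC.concat (hA : A.Wellformed) {l : List S} {s t : S} (h : MC A σ₁ σ₂ s₀ (l ++ [s]))
    (hst : stepWeight A σ₁ σ₂ l s t ≠ 0) : MC A σ₁ σ₂ s₀ (l ++ [s, t]) := by
  by_cases hE : A.E s = ∅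
  · obtain rfl : t = s := by simpa only [stepWeight, hE, if_true, ne_eq, ite_eq_right_iff,
      one_ne_zero, imp_false, not_not] using hst
    exact MC.term _ _ h hE
  cases ho : A.owner s with
  | one =>
    obtain rfl : t = σ₁.next l s := by simpa only [stepWeight, hE, ho, if_false, ne_eq,
      ite_eq_right_iff, one_ne_zero, imp_false, not_not] using hst
    exact MC.one _ _ h ho hE
  | two =>
    obtain rfl : t = σ₂.next l s := by simpa only [stepWeight, hE, ho, if_false, ne_eq,
      ite_eq_right_iff, one_ne_zero, imp_false, not_not] using hst
    exact MC.two _ _ h ho hE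
  | nature =>
    refine MC.nature _ _ _ h ho ?_
    rw [(hA _ ho).2.2, Function.mem_support]
    simpa only [stepWeight, hE, ho, if_false] using hst

theorem mc_concat_iff (hA : A.Wellformed) {l : List S} {s t : S} :
    MC A σ₁ σ₂ s₀ (l ++ [s, t]) ↔
      MC A σ₁ σ₂ s₀ (l ++ [s]) ∧ stepWeight A σ₁ σ₂ l s t ≠ 0 :=
  ⟨MC.of_concat hA, fun h => h.1.concat hA h.2⟩

theorem stepWeight_eq_stepProb (hA : A.Wellformed) {l : List S} {s t : S}
    (h : stepWeight A σ₁ σ₂ l s t ≠ 0) : stepWeight A σ₁ σ₂ l s t = stepProb A s t := by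
  by_cases hE : A.E s = ∅
  · have ho : A.owner s ≠ Player.nature := fun ho => hA.E_ne_empty ho hE
    simp_all [stepWeight, stepProb]
  · cases ho : A.owner s <;> simp_all [stepWeight, stepProb]

theorem stepWeight_nonneg (hA : A.Wellformed) (l : List S) (s t : S) :
    0 ≤ stepWeight A σ₁ σ₂ l s t := by
  by_cases hE : A.E s = ∅
  · rw [stepWeight, if_pos hE]; split_ifs <;> norm_num
  · cases ho : A.owner s with
    | one | two => simp only [stepWeight, hE, ho, if_false]; split_ifs <;> norm_num
    | nature => simpa only [stepWeight, hE, ho, if_false] using (hA s ho).1 t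

theorem hasSum_stepWeight (hA : A.Wellformed) (l : List S) (s : S) :
    HasSum (stepWeight A σ₁ σ₂ l s) 1 := by
  unfold stepWeight
  split_ifs
  · exact hasSum_ite_eq s 1
  split
  · exact hasSum_ite_eq _ 1
  · exact hasSum_ite_eq _ 1
  · next ho => exact (hA s ho).2.1

theorem historyWeight_nil : historyWeight A σ₁ σ₂ s₀ [] = 1 := if_pos rfl

theorem historyWeight_singleton (s : S) :
    historyWeight A σ₁ σ₂ s₀ [s] = if s = s₀ then 1 else 0 := by
  rw [historyWeight, if_neg (List.cons_ne_nil _ _), cylWeight]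
  simp only [mc_singleton_iff, pathProb]
  split_ifs
  · exact ENNReal.ofReal_one
  · exact ENNReal.ofReal_zero

theorem historyWeight_concat (hA : A.Wellformed) (l : List S) (s t : S) :
    historyWeight A σ₁ σ₂ s₀ (l ++ [s, t]) =
      historyWeight A σ₁ σ₂ s₀ (l ++ [s]) * ENNReal.ofReal (stepWeight A σ₁ σ₂ l s t) := by
  rw [historyWeight, historyWeight, if_neg (List.append_ne_nil_of_right_ne_nil _ (by simp)),
    if_neg (List.append_ne_nil_of_right_ne_nil _ (by simp)),
    ← ENNReal.ofReal_mul' (stepWeight_nonneg hA l s t), cylWeight, cylWeight]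
  simp only [mc_concat_iff hA]
  congr 1
  by_cases hl : MC A σ₁ σ₂ s₀ (l ++ [s])
  · by_cases hst : stepWeight A σ₁ σ₂ l s t = 0
    · rw [if_neg fun h => h.2 hst, hst, mul_zero]
    · rw [if_pos ⟨hl, hst⟩, if_pos hl, pathProb_concat, stepWeight_eq_stepProb hA hst]
  · rw [if_neg fun h => hl h.1, if_neg hl, zero_mul]

theorem isTreeWeight_historyWeight (hA : A.Wellformed) :
    IsTreeWeight (historyWeight A σ₁ σ₂ s₀) where
  nil := historyWeight_nil
  tsum_concat l := by
    obtain rfl | ⟨l, s, rfl⟩ := l.eq_nil_or_concat'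
    · simp only [List.nil_append, historyWeight_singleton, tsum_ite_eq, historyWeight_nil]
    · simp only [List.append_assoc, List.cons_append, List.nil_append, historyWeight_concat hA]
      rw [ENNReal.tsum_mul_left, ← ENNReal.ofReal_tsum_of_nonneg (stepWeight_nonneg hA l s)
        (hasSum_stepWeight hA l s).summable, (hasSum_stepWeight hA l s).tsum_eq,
        ENNReal.ofReal_one, mul_one]

theorem pathMeasure_spec (hA : A.Wellformed) : IsProbabilityMeasure (pathMeasure A σ₁ σ₂ s₀) ∧
    ∀ l : List S, l ≠ [] →
      pathMeasure A σ₁ σ₂ s₀ (cyl l) = ENNReal.ofReal (cylWeight A σ₁ σ₂ s₀ l) := by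
  obtain ⟨μ, hμ, hcyl⟩ := (isTreeWeight_historyWeight (σ₁ := σ₁) (σ₂ := σ₂) (s₀ := s₀)
    hA).exists_measure
  have hex : ∃ μ : Measure (PathSpace S), IsProbabilityMeasure μ ∧
      ∀ l : List S, l ≠ [] → μ (cyl l) = ENNReal.ofReal (cylWeight A σ₁ σ₂ s₀ l) :=
    ⟨μ, hμ, fun l hl => (hcyl l).trans (if_neg hl)⟩
  rw [pathMeasure, dif_pos hex]
  exact hex.choose_spec

theorem isProbabilityMeasure_pathMeasure (hA : A.Wellformed) :
    IsProbabilityMeasure (pathMeasure A σ₁ σ₂ s₀) := (pathMeasure_spec hA).1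

theorem pathMeasure_cyl (hA : A.Wellformed) (l : List S) :
    pathMeasure A σ₁ σ₂ s₀ (cyl l) = historyWeight A σ₁ σ₂ s₀ l := by
  have := isProbabilityMeasure_pathMeasure (σ₁ := σ₁) (σ₂ := σ₂) (s₀ := s₀) hA
  obtain rfl | hl := eq_or_ne l []
  · rw [cyl_nil, measure_univ, historyWeight_nil]
  · rw [(pathMeasure_spec hA).2 l hl, historyWeight, if_neg hl]

theorem pathMeasure_cyl_singleton (hA : A.Wellformed) :
    pathMeasure A σ₁ σ₂ s₀ (cyl [s₀]) = 1 := by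
  rw [pathMeasure_cyl hA, historyWeight_singleton, if_pos rfl]

theorem pathMeasure_cyl_concat (hA : A.Wellformed) (l : List S) (s t : S) :
    pathMeasure A σ₁ σ₂ s₀ (cyl (l ++ [s, t])) =
      pathMeasure A σ₁ σ₂ s₀ (cyl (l ++ [s])) * ENNReal.ofReal (stepWeight A σ₁ σ₂ l s t) := by
  simp only [pathMeasure_cyl hA, historyWeight_concat hA]

theorem eq_pathMeasure (hA : A.Wellformed) {ν : Measure (PathSpace S)} [IsProbabilityMeasure ν]
    (singleton : ν (cyl [s₀]) = 1)
    (concat : ∀ l s t, ν (cyl (l ++ [s])) ≠ 0 →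
      ν (cyl (l ++ [s, t])) = ν (cyl (l ++ [s])) * ENNReal.ofReal (stepWeight A σ₁ σ₂ l s t)) :
    ν = pathMeasure A σ₁ σ₂ s₀ := by
  have := isProbabilityMeasure_pathMeasure (σ₁ := σ₁) (σ₂ := σ₂) (s₀ := s₀) hA
  refine (isTreeWeight_historyWeight hA).measure_ext (fun l => ?_) (pathMeasure_cyl hA)
  induction l using list_concat_induction with
  | nil => rw [cyl_nil, measure_univ, historyWeight_nil]
  | singleton s =>
    rw [historyWeight_singleton]
    split_ifs with hs
    · rw [hs, singleton]
    · refine measure_mono_null (t := (cyl [s₀])ᶜ) (fun u hu hu₀ => hs ?_)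
        ((prob_compl_eq_zero_iff (measurableSet_cyl [s₀])).2 singleton)
      exact (mem_cyl_singleton.1 hu).symm.trans (mem_cyl_singleton.1 hu₀)
  | concat l s t ih =>
    rw [historyWeight_concat hA, ← ih]
    obtain h0 | h0 := eq_or_ne (ν (cyl (l ++ [s]))) 0
    · rw [h0, zero_mul]
      refine measure_mono_null (fun u hu => ?_) h0
      rw [← List.singleton_append, ← List.append_assoc] at hu
      exact (mem_cyl_concat.1 hu).1
    · exact concat l s t h0

theorem eq_of_pathMeasure_cyl_concat_ne_zero (hA : A.Wellformed) {l : List S} {s y : S}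
    (h : pathMeasure A σ₁ σ₂ s₀ (cyl (l ++ [s])) ≠ 0) (hy : y ∈ l) (hE : A.E y = ∅) : s = y := by
  induction l using List.reverseRecOn generalizing s with
  | nil => exact absurd hy List.not_mem_nil
  | append_singleton l x ih =>
    rw [List.append_assoc, List.singleton_append, pathMeasure_cyl_concat hA] at h
    obtain ⟨hx, hstep⟩ := mul_ne_zero_iff.1 h
    obtain rfl : x = y := (List.mem_append.1 hy).elim (ih hx) fun h => (List.mem_singleton.1 h).symm
    by_contra hne
    rw [stepWeight, if_pos hE, if_neg hne, ENNReal.ofReal_zero] at hstep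
    exact hstep rfl

end MarkovChain

/-! ### The Markov property -/

section MarkovProperty

open MeasureTheory ProbabilityTheory PathSpace

/-- The strategy that `τ` prescribes for the rest of a play whose past, excluding the current
state, is `h`. -/
def Strategy.shift {A : Arena S} {pl : Player} (τ : Strategy A pl) (h : List S) :
    Strategy A pl where
  next l s := τ.next (h ++ l) s
  valid l s := τ.valid (h ++ l) s

theorem head?_eq_of_mem_cyl {l : List S} (hl : l ≠ []) {u : PathSpace S} (hu : u ∈ cyl l) :
    l.head? = some (u 0) := by
  obtain ⟨s, l, rfl⟩ := List.exists_cons_of_ne_nil hl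
  exact congrArg some (hu ⟨0, Nat.succ_pos _⟩).symm

theorem head?_eq_of_mem_cyl_concat {l : List S} {s : S} {u : PathSpace S}
    (hu : u ∈ cyl (l ++ [s])) : (l ++ [s]).head? = some (u 0) :=
  head?_eq_of_mem_cyl (List.append_ne_nil_of_right_ne_nil _ (List.cons_ne_nil _ _)) hu

theorem cyl_subset_cyl_singleton {l : List S} {s : S} (hl : l.head? = some s) :
    cyl l ⊆ cyl [s] := by
  obtain ⟨l, rfl⟩ := List.head?_eq_some_iff.1 hl
  exact (cyl_append [s] l).trans_subset Set.inter_subset_left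

variable {A : Arena S} {σ₁ τ₁ : Strategy A Player.one} {σ₂ τ₂ : Strategy A Player.two} {s₀ : S}

theorem head?_eq_of_pathMeasure_cyl_concat_ne_zero (hA : A.Wellformed) {l : List S} {s : S}
    (h : pathMeasure A σ₁ σ₂ s₀ (cyl (l ++ [s])) ≠ 0) : (l ++ [s]).head? = some s₀ := by
  have := isProbabilityMeasure_pathMeasure (σ₁ := σ₁) (σ₂ := σ₂) (s₀ := s₀) hA
  obtain ⟨u, hu, hu₀⟩ : (cyl (l ++ [s]) ∩ cyl [s₀]).Nonempty := by
    refine nonempty_of_measure_ne_zero (μ := pathMeasure A σ₁ σ₂ s₀) ?_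
    rwa [measure_inter_conull ((prob_compl_eq_zero_iff (measurableSet_cyl _)).2
      (pathMeasure_cyl_singleton hA))]
  rw [head?_eq_of_mem_cyl_concat hu, mem_cyl_singleton.1 hu₀]

theorem pathMeasure_congr (hA : A.Wellformed)
    (h₁ : ∀ l s, (l ++ [s]).head? = some s₀ → σ₁.next l s = τ₁.next l s)
    (h₂ : ∀ l s, (l ++ [s]).head? = some s₀ → σ₂.next l s = τ₂.next l s) :
    pathMeasure A σ₁ σ₂ s₀ = pathMeasure A τ₁ τ₂ s₀ := by
  have := isProbabilityMeasure_pathMeasure (σ₁ := σ₁) (σ₂ := σ₂) (s₀ := s₀) hA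
  refine eq_pathMeasure hA (pathMeasure_cyl_singleton hA) fun l s t h => ?_
  have head := head?_eq_of_pathMeasure_cyl_concat_ne_zero hA h
  rw [pathMeasure_cyl_concat hA, stepWeight, stepWeight, h₁ l s head, h₂ l s head]

theorem map_drop_cond_pathMeasure (hA : A.Wellformed) {h : List S} {s : S}
    (hs : pathMeasure A σ₁ σ₂ s₀ (cyl (h ++ [s])) ≠ 0) :
    ((pathMeasure A σ₁ σ₂ s₀)[|cyl (h ++ [s])]).map (drop h.length) =
      pathMeasure A (σ₁.shift h) (σ₂.shift h) s := by
  have := isProbabilityMeasure_pathMeasure (σ₁ := σ₁) (σ₂ := σ₂) (s₀ := s₀) hA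
  set μ := pathMeasure A σ₁ σ₂ s₀
  have := cond_isProbabilityMeasure hs
  have := Measure.isProbabilityMeasure_map (μ := μ[|cyl (h ++ [s])])
    (measurable_drop (S := S) h.length).aemeasurable
  have map_cyl {l : List S} (hl : l.head? = some s) :
      μ[|cyl (h ++ [s])].map (drop h.length) (cyl l) =
        (μ (cyl (h ++ [s])))⁻¹ * μ (cyl (h ++ l)) := by
    rw [Measure.map_apply (measurable_drop _) (measurableSet_cyl _),
      cond_apply (measurableSet_cyl _), cyl_append, cyl_append, Set.inter_assoc,
      ← Set.preimage_inter, Set.inter_eq_right.2 (cyl_subset_cyl_singleton hl)]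
  refine eq_pathMeasure hA ?_ fun l r t hr => ?_
  · rw [map_cyl rfl, ENNReal.inv_mul_cancel hs (measure_ne_top _ _)]
  · have head : (l ++ [r]).head? = some s := by
      rw [Measure.map_apply (measurable_drop _) (measurableSet_cyl _)] at hr
      obtain ⟨u, hus, hur⟩ := nonempty_of_measure_ne_zero (inter_pos_of_cond_ne_zero
        (measurableSet_cyl _) hr).ne'
      rw [head?_eq_of_mem_cyl_concat hur, ← (mem_cyl_concat.1 hus).2]; rfl
    have head' : (l ++ [r, t]).head? = some s := by
      rw [← List.singleton_append, ← List.append_assoc, List.head?_append, head]; rfl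
    rw [map_cyl head, map_cyl head', mul_assoc, ← List.append_assoc, ← List.append_assoc,
      pathMeasure_cyl_concat hA]
    rfl

end MarkovProperty

/-! ### Payoffs -/

section Payoff

open MeasureTheory PathSpace Filter

theorem even_sSup_iff {Q : Set ℕ} : Even (sSup Q) ↔ ∀ k, IsGreatest Q k → Even k := by
  refine ⟨fun h k hk => hk.csSup_eq ▸ h, fun h => ?_⟩
  by_cases hQ : Q.Nonempty ∧ BddAbove Q
  · exact h _ ⟨Nat.sSup_mem hQ.1 hQ.2, fun n hn => le_csSup hQ.2 hn⟩
  · have : sSup Q = 0 := by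
      obtain rfl | hne := Q.eq_empty_or_nonempty
      · exact csSup_empty
      · exact Nat.sSup_of_not_bddAbove fun hb => hQ ⟨hne, hb⟩
    exact this ▸ Even.zero

theorem measurable_infinite_setOf_coord (pri : S → ℕ) (n : ℕ) :
    Measurable fun u : PathSpace S => {i | pri (u i) = n}.Infinite := by
  simp only [← Nat.frequently_atTop_iff_infinite, frequently_atTop]
  exact Measurable.forall fun _ => Measurable.exists fun i => measurable_const.and
    (measurable_mem.2 (measurableSet_setOf_coord_mem i {s | pri s = n}))

theorem measurableSet_even_sSup (pri : S → ℕ) :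
    MeasurableSet {u : PathSpace S | Even (sSup {n | {i | pri (u i) = n}.Infinite})} := by
  have hI := measurable_infinite_setOf_coord pri
  simp only [even_sSup_iff, IsGreatest, mem_upperBounds]
  exact measurableSet_setOfPred.2 <| Measurable.forall fun k => Measurable.imp
    ((hI k).and (Measurable.forall fun n => (hI n).imp measurable_const)) measurable_const

theorem measurable_payoff (A : Arena S) (pri : S → ℕ) (R : S → ℝ) :
    Measurable (payoff A pri R) := by
  let terminal : Set S := {s | A.E s = ∅}
  have exists_find (u : PathSpace S) : ∃ n, (∃ i, A.E (u i) = ∅) → A.E (u n) = ∅ := by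
    by_cases h : ∃ i, A.E (u i) = ∅
    · exact h.imp fun _ hi _ => hi
    · exact ⟨0, fun h' => absurd h' h⟩
  have payoff_eq : payoff A pri R = fun u =>
      if A.E (u (Nat.find (exists_find u))) = ∅ then R (u (Nat.find (exists_find u)))
      else if Even (sSup {n | {i | pri (u i) = n}.Infinite}) then 1 else 0 := by
    funext u
    by_cases h : ∃ i, A.E (u i) = ∅
    · have find_eq : Nat.find (exists_find u) = Nat.find h :=
        Nat.find_congr' (by simp only [h, forall_const])
      rw [payoff, dif_pos h, find_eq, if_pos (Nat.find_spec h)]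
    · rw [payoff, dif_neg h, if_neg fun h' => h ⟨_, h'⟩]
  have measurableSet_terminal (n : ℕ) : MeasurableSet {u : PathSpace S | A.E (u n) = ∅} :=
    measurableSet_setOf_coord_mem n terminal
  rw [payoff_eq]
  refine Measurable.find (f := fun n u => if A.E (u n) = ∅ then R (u n)
    else if Even (sSup {n | {i | pri (u i) = n}.Infinite}) then 1 else 0)
    (fun n => Measurable.ite (measurableSet_terminal n)
      (show Measurable fun u : PathSpace S => R (u n) from
        fun B _ => measurableSet_setOf_coord_mem n (R ⁻¹' B))
      (Measurable.ite (measurableSet_even_sSup pri) measurable_const measurable_const))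
    (fun n => ?_) exists_find
  exact measurableSet_setOfPred.2 <| Measurable.imp
    (Measurable.exists fun i => measurableSet_setOfPred.1 (measurableSet_terminal i))
    (measurableSet_setOfPred.1 (measurableSet_terminal n))

variable {A : Arena S} {pri : S → ℕ} {R : S → ℝ}

theorem payoff_mem_Icc (hR : ∀ s, R s ∈ Set.Icc (0 : ℝ) 1) (u : PathSpace S) :
    payoff A pri R u ∈ Set.Icc (0 : ℝ) 1 := by
  unfold payoff
  split_ifs
  · exact hR _
  · exact unitInterval.one_mem
  · exact unitInterval.zero_mem

theorem integrable_payoff (hR : ∀ s, R s ∈ Set.Icc (0 : ℝ) 1) (μ : Measure (PathSpace S))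
    [IsFiniteMeasure μ] : Integrable (payoff A pri R) μ :=
  Integrable.of_mem_Icc 0 1 (measurable_payoff A pri R).aemeasurable
    (Eventually.of_forall (payoff_mem_Icc hR))

theorem expReward_mem_Icc (hA : A.Wellformed) (hR : ∀ s, R s ∈ Set.Icc (0 : ℝ) 1)
    (σ₁ : Strategy A Player.one) (σ₂ : Strategy A Player.two) (s : S) :
    expReward A pri R σ₁ σ₂ s ∈ Set.Icc (0 : ℝ) 1 := by
  have := isProbabilityMeasure_pathMeasure (σ₁ := σ₁) (σ₂ := σ₂) (s₀ := s) hA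
  exact (convex_Icc 0 1).integral_mem isClosed_Icc (Eventually.of_forall (payoff_mem_Icc hR))
    (integrable_payoff hR _)

theorem payoff_drop {n : ℕ} {u : PathSpace S} (hu : ∀ i < n, A.E (u i) ≠ ∅) :
    payoff A pri R (drop n u) = payoff A pri R u := by
  have terminal_iff : (∃ i, A.E (drop n u i) = ∅) ↔ ∃ i, A.E (u i) = ∅ := by
    refine ⟨fun ⟨i, hi⟩ => ⟨n + i, hi⟩, fun ⟨i, hi⟩ => ⟨i - n, ?_⟩⟩
    rwa [drop, Nat.add_sub_cancel' (not_lt.1 fun hin => hu i hin hi)]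
  have infinite_iff (k : ℕ) :
      {i | pri (drop n u i) = k}.Infinite ↔ {i | pri (u i) = k}.Infinite := by
    rw [← Nat.frequently_atTop_iff_infinite, ← Nat.frequently_atTop_iff_infinite]
    conv_rhs => rw [← map_add_atTop_eq_nat n, frequently_map]
    simp only [drop, add_comm n]
  unfold payoff
  simp only [infinite_iff]
  by_cases h : ∃ i, A.E (drop n u i) = ∅
  · have find_eq : Nat.find (terminal_iff.1 h) = n + Nat.find h := by
      refine (Nat.find_eq_iff _).2 ⟨Nat.find_spec h, fun i hi hi' => ?_⟩
      have hni : n ≤ i := not_lt.1 fun hin => hu i hin hi'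
      refine Nat.find_min h (m := i - n) (by omega) ?_
      rwa [drop, Nat.add_sub_cancel' hni]
    rw [dif_pos h, dif_pos (terminal_iff.1 h), find_eq]; rfl
  · rw [dif_neg h, dif_neg (terminal_iff.not.1 h)]

theorem setIntegral_cyl_payoff (hA : A.Wellformed) {σ₁ : Strategy A Player.one}
    {σ₂ : Strategy A Player.two} {s₀ s : S} {h : List S} (hh : ∀ y ∈ h, A.E y ≠ ∅) :
    ∫ u in cyl (h ++ [s]), payoff A pri R u ∂pathMeasure A σ₁ σ₂ s₀ =
      (pathMeasure A σ₁ σ₂ s₀).real (cyl (h ++ [s])) *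
        expReward A pri R (σ₁.shift h) (σ₂.shift h) s := by
  have := isProbabilityMeasure_pathMeasure (σ₁ := σ₁) (σ₂ := σ₂) (s₀ := s₀) hA
  set μ := pathMeasure A σ₁ σ₂ s₀
  obtain h0 | h0 := eq_or_ne (μ (cyl (h ++ [s]))) 0
  · rw [setIntegral_measure_zero _ h0, measureReal_def, h0, ENNReal.toReal_zero, zero_mul]
  have drop_eq : ∀ u ∈ cyl (h ++ [s]), payoff A pri R (drop h.length u) = payoff A pri R u := by
    refine fun u hu => payoff_drop fun i hi => hh _ ?_
    rw [← mem_cyl_iff.1 (mem_cyl_concat.1 hu).1]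
    exact mem_take.2 ⟨i, hi, rfl⟩
  rw [expReward, ← map_drop_cond_pathMeasure hA h0,
    integral_map (measurable_drop _).aemeasurable (measurable_payoff _ _ _).aestronglyMeasurable,
    ProbabilityTheory.cond, integral_smul_measure,
    setIntegral_congr_fun (measurableSet_cyl _) drop_eq, ENNReal.toReal_inv, smul_eq_mul,
    measureReal_def, mul_inv_cancel_left₀ (ENNReal.toReal_ne_zero.2 ⟨h0, measure_ne_top _ _⟩)]

end Payoff

/-! ### First visits to a set of states -/

section FirstVisit

open MeasureTheory PathSpace

/-- The finite paths whose last state is their first visit to `T`. -/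
def firstVisits (T : Set S) : Set (List S) :=
  {l | ∃ h t, l = h ++ [t] ∧ (∀ y ∈ h, y ∉ T) ∧ t ∈ T}

variable {T : Set S}

theorem apply_mem_of_mem_cyl {l : List S} {u : PathSpace S} (hu : u ∈ cyl l) {i : ℕ}
    (hi : i < l.length) : u i ∈ l := by
  rw [hu ⟨i, hi⟩]; exact l.get_mem _

theorem exists_take_mem_firstVisits {u : PathSpace S} (hu : ∃ i, u i ∈ T) :
    ∃ n, take n u ∈ firstVisits T := by
  refine ⟨Nat.find hu + 1, take (Nat.find hu) u, _, take_succ _ u, fun y hy => ?_, Nat.find_spec hu⟩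
  obtain ⟨i, hi, rfl⟩ := mem_take.1 hy
  exact Nat.find_min hu hi

theorem length_le_of_mem_firstVisits {l l' : List S} (hl : l ∈ firstVisits T)
    (hl' : l' ∈ firstVisits T) {u : PathSpace S} (hu : u ∈ cyl l) (hu' : u ∈ cyl l') :
    l.length ≤ l'.length := by
  obtain ⟨h, t, rfl, hh, -⟩ := hl
  obtain ⟨h', t', rfl, -, ht'⟩ := hl'
  rw [List.length_append, List.length_append, List.length_singleton, List.length_singleton]
  refine Nat.succ_le_succ (not_lt.1 fun hlt => ?_)
  refine hh _ (apply_mem_of_mem_cyl (mem_cyl_concat.1 hu).1 hlt) ?_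
  rwa [(mem_cyl_concat.1 hu').2]

theorem pairwiseDisjoint_cyl_firstVisits : (firstVisits T).PairwiseDisjoint cyl :=
  fun l hl l' hl' hne => Set.disjoint_left.2 fun u hu hu' => hne <| by
    rw [← mem_cyl_iff.1 hu, ← mem_cyl_iff.1 hu',
      (length_le_of_mem_firstVisits hl hl' hu hu').antisymm
        (length_le_of_mem_firstVisits hl' hl hu' hu)]

theorem IsTreeWeight.integral_nonpos_of_firstVisits {W : List S → ENNReal} (hW : IsTreeWeight W)
    {μ : Measure (PathSpace S)} [IsProbabilityMeasure μ] (hμ : ∀ l, μ (cyl l) = W l)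
    {f : PathSpace S → ℝ} (hf : Integrable f μ) (avoid : ∀ u, (∀ i, u i ∉ T) → f u ≤ 0)
    (visit : ∀ l ∈ firstVisits T, μ (cyl l) ≠ 0 → ∫ u in cyl l, f u ∂μ ≤ 0) :
    ∫ u, f u ∂μ ≤ 0 := by
  let K := firstVisits T ∩ Function.support W
  have : Countable K := (hW.countable_support.mono Set.inter_subset_right).to_subtype
  let U := ⋃ l : K, cyl l.1
  have hU : MeasurableSet U := .iUnion fun l => measurableSet_cyl l.1
  have integral_visit : ∫ u in U, f u ∂μ ≤ 0 := by
    rw [integral_iUnion (fun l : K => measurableSet_cyl l.1) (fun l l' hne =>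
      pairwiseDisjoint_cyl_firstVisits l.2.1 l'.2.1 (Subtype.coe_injective.ne hne)) hf.integrableOn]
    exact tsum_nonpos fun l => visit l l.2.1 (by rw [hμ]; exact l.2.2)
  have integral_avoid : ∫ u in Uᶜ, f u ∂μ ≤ 0 := by
    refine setIntegral_nonpos_of_ae_restrict ((ae_restrict_iff' hU.compl).2 ?_)
    filter_upwards [hW.ae_take_ne_zero hμ] with u hu huU
    refine avoid u fun i hi => huU ?_
    obtain ⟨n, hn⟩ := exists_take_mem_firstVisits ⟨i, hi⟩
    exact Set.mem_iUnion.2 ⟨⟨take n u, hn, hu n⟩, mem_cyl_take n u⟩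
  rw [← integral_add_compl hU hf]
  exact add_nonpos integral_visit integral_avoid

theorem IsTreeWeight.integral_le_of_firstVisits {W : List S → ENNReal} (hW : IsTreeWeight W)
    {μ : Measure (PathSpace S)} [IsProbabilityMeasure μ] (hμ : ∀ l, μ (cyl l) = W l)
    {f : PathSpace S → ℝ} (hf : Integrable f μ) {ε : ℝ} (avoid : ∀ u, (∀ i, u i ∉ T) → f u ≤ ε)
    (visit : ∀ l ∈ firstVisits T, μ (cyl l) ≠ 0 → ∫ u in cyl l, f u ∂μ ≤ μ.real (cyl l) * ε) :
    ∫ u, f u ∂μ ≤ ε := by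
  have integral_sub_nonpos : ∫ u, (f u - ε) ∂μ ≤ 0 := by
    refine hW.integral_nonpos_of_firstVisits hμ (hf.sub (integrable_const ε))
      (fun u hu => sub_nonpos.2 (avoid u hu)) fun l hl h0 => ?_
    rw [integral_sub hf.integrableOn (integrable_const ε), setIntegral_const, smul_eq_mul]
    exact sub_nonpos.2 (visit l hl h0)
  rwa [integral_sub hf (integrable_const ε), integral_const, probReal_univ, one_smul,
    sub_nonpos] at integral_sub_nonpos

/-- The path `u`, frozen from its first visit to `T` on. -/
def stopAt (T : Set S) (u : PathSpace S) : PathSpace S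
  | 0 => u 0
  | n + 1 => if stopAt T u n ∈ T then stopAt T u n else u (n + 1)

variable {u : PathSpace S}

theorem stopAt_apply_of_forall_notMem {n : ℕ} (hu : ∀ i < n, u i ∉ T) : stopAt T u n = u n := by
  induction n with
  | zero => rfl
  | succ n ih =>
    rw [stopAt, ih fun i hi => hu i (hi.trans n.lt_succ_self), if_neg (hu n n.lt_succ_self)]

theorem stopAt_apply_of_mem {m n : ℕ} (hmn : m ≤ n) (hm : stopAt T u m ∈ T) :
    stopAt T u n = stopAt T u m := by
  induction n, hmn using Nat.le_induction with
  | base => rfl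
  | succ n _ ih => rw [stopAt, ih, if_pos hm]

theorem measurable_stopAt (T : Set S) : Measurable (stopAt T) := by
  refine measurable_iff.2 fun n => ?_
  induction n with
  | zero => exact measurableSet_setOf_coord_mem 0
  | succ n ih =>
    intro B
    have union_eq : {u | stopAt T u (n + 1) ∈ B} =
        {u | stopAt T u n ∈ T ∩ B} ∪ {u | stopAt T u n ∈ Tᶜ} ∩ {u | u (n + 1) ∈ B} := by
      ext u
      by_cases hu : stopAt T u n ∈ T <;> simp [stopAt, hu]
    rw [union_eq]
    exact (ih _).union ((ih _).inter (measurableSet_setOf_coord_mem (n + 1) B))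

theorem stopAt_mem_cyl_concat {l : List S} {s : S} (hl : ∀ y ∈ l, y ∉ T) :
    stopAt T u ∈ cyl (l ++ [s]) ↔ u ∈ cyl (l ++ [s]) := by
  induction l using List.reverseRecOn generalizing s with
  | nil => rw [List.nil_append, mem_cyl_singleton, mem_cyl_singleton]; rfl
  | append_singleton l r ih =>
    rw [mem_cyl_concat (l := l ++ [r]), mem_cyl_concat (l := l ++ [r]),
      ih fun y hy => hl y (List.mem_append_left _ hy)]
    refine and_congr_right fun hu => ?_
    rw [stopAt_apply_of_forall_notMem fun i hi => hl _ (apply_mem_of_mem_cyl hu hi)]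

theorem stopAt_mem_cyl_concat_pair {l : List S} {s t : S} (hs : s ∈ T) :
    stopAt T u ∈ cyl (l ++ [s, t]) ↔ stopAt T u ∈ cyl (l ++ [s]) ∧ t = s := by
  rw [List.append_cons, mem_cyl_concat]
  refine and_congr_right fun h => ?_
  have last := (mem_cyl_concat.1 h).2
  rw [stopAt_apply_of_mem (m := l.length) (List.length_append.trans_ge (Nat.le_add_right _ _))
    (last.symm ▸ hs), last, eq_comm]

theorem notMem_of_stopAt_mem_cyl_concat {l : List S} {s : S} (hs : s ∉ T)
    (hu : stopAt T u ∈ cyl (l ++ [s])) : ∀ y ∈ l ++ [s], y ∉ T := by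
  intro y hy hyT
  rw [← mem_cyl_iff.1 hu] at hy
  obtain ⟨i, hi, rfl⟩ := mem_take.1 hy
  rw [List.length_append, List.length_singleton, Nat.lt_succ_iff] at hi
  exact hs ((mem_cyl_concat.1 hu).2 ▸ stopAt_apply_of_mem hi hyT ▸ hyT)

end FirstVisit

/-! ### Cutting an arena -/

section Cut

open MeasureTheory PathSpace

/-- The arena `A` with the states in `T` made terminal. They are handed to Player 1, because a
terminal Nature state would violate well-formedness. -/
def Arena.cut (A : Arena S) (T : Set S) : Arena S where
  E s := if s ∈ T then ∅ else A.E s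
  owner s := if s ∈ T then Player.one else A.owner s
  prob := A.prob

/-- The strategies `τ` and `τ'`, possibly in different arenas, make the same moves as long as `T`
has not been visited. -/
def AgreeBefore {A B : Arena S} {pl : Player} (T : Set S) (τ : Strategy A pl)
    (τ' : Strategy B pl) : Prop :=
  ∀ l s, (∀ y ∈ l ++ [s], y ∉ T) → τ.next l s = τ'.next l s

variable {A : Arena S} {T : Set S} {s t : S}

theorem Arena.cut_E_of_mem (hs : s ∈ T) : (A.cut T).E s = ∅ := if_pos hs

theorem Arena.cut_E_of_notMem (hs : s ∉ T) : (A.cut T).E s = A.E s := if_neg hs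

theorem Arena.cut_owner_of_notMem (hs : s ∉ T) : (A.cut T).owner s = A.owner s := if_neg hs

theorem Arena.Wellformed.cut (hA : A.Wellformed) (T : Set S) : (A.cut T).Wellformed := by
  intro s ho
  have hs : s ∉ T := fun hs => Player.noConfusion ((if_pos hs).symm.trans ho)
  rw [cut_E_of_notMem hs]
  exact hA s (cut_owner_of_notMem hs ▸ ho)

variable {σ₁ : Strategy A Player.one} {σ₂ : Strategy A Player.two}
  {τ₁ : Strategy (A.cut T) Player.one} {τ₂ : Strategy (A.cut T) Player.two} {s₀ : S}

theorem stepWeight_cut_of_mem (hs : s ∈ T) (l : List S) (t : S) :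
    stepWeight (A.cut T) τ₁ τ₂ l s t = if t = s then 1 else 0 :=
  if_pos (Arena.cut_E_of_mem hs)

theorem stepWeight_cut_of_notMem (h₁ : AgreeBefore T σ₁ τ₁) (h₂ : AgreeBefore T σ₂ τ₂)
    {l : List S} (hl : ∀ y ∈ l ++ [s], y ∉ T) (t : S) :
    stepWeight (A.cut T) τ₁ τ₂ l s t = stepWeight A σ₁ σ₂ l s t := by
  have hs : s ∉ T := hl s List.mem_concat_self
  rw [stepWeight, stepWeight, Arena.cut_E_of_notMem hs, Arena.cut_owner_of_notMem hs, h₁ l s hl,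
    h₂ l s hl]
  rfl

theorem map_stopAt_pathMeasure (hA : A.Wellformed) (h₁ : AgreeBefore T σ₁ τ₁)
    (h₂ : AgreeBefore T σ₂ τ₂) :
    (pathMeasure A σ₁ σ₂ s₀).map (stopAt T) = pathMeasure (A.cut T) τ₁ τ₂ s₀ := by
  have := isProbabilityMeasure_pathMeasure (σ₁ := σ₁) (σ₂ := σ₂) (s₀ := s₀) hA
  have := Measure.isProbabilityMeasure_map (μ := pathMeasure A σ₁ σ₂ s₀)
    (measurable_stopAt T).aemeasurable
  have map_cyl (l : List S) : (pathMeasure A σ₁ σ₂ s₀).map (stopAt T) (cyl l) =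
      pathMeasure A σ₁ σ₂ s₀ {u | stopAt T u ∈ cyl l} :=
    Measure.map_apply (measurable_stopAt T) (measurableSet_cyl l)
  refine eq_pathMeasure (hA.cut T) ?_ fun l s t h => ?_ <;> rw [map_cyl] at *
  · have stopAt_mem_iff (u : PathSpace S) : stopAt T u ∈ cyl [s₀] ↔ u ∈ cyl [s₀] :=
      stopAt_mem_cyl_concat (l := []) fun _ => False.elim ∘ List.not_mem_nil
    simp only [stopAt_mem_iff, Set.ofPred_mem_eq, pathMeasure_cyl_singleton hA]
  · rw [map_cyl]
    by_cases hs : s ∈ T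
    · simp only [stopAt_mem_cyl_concat_pair hs, stepWeight_cut_of_mem hs]
      split_ifs with hts <;> simp [hts]
    · obtain ⟨u, hu⟩ := nonempty_of_measure_ne_zero h
      have hl := notMem_of_stopAt_mem_cyl_concat hs hu
      have stopAt_mem_iff (u : PathSpace S) :
          stopAt T u ∈ cyl (l ++ [s, t]) ↔ u ∈ cyl (l ++ [s, t]) := by
        rw [List.append_cons, stopAt_mem_cyl_concat hl]
      simp only [stopAt_mem_iff, stopAt_mem_cyl_concat fun y hy => hl y (List.mem_append_left _ hy),
        Set.ofPred_mem_eq]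
      rw [stepWeight_cut_of_notMem h₁ h₂ hl, pathMeasure_cyl_concat hA]

variable {pri pri' : S → ℕ} {R R' : S → ℝ} {u : PathSpace S}

theorem payoff_of_E_eq_empty (hu : A.E (u 0) = ∅) : payoff A pri R u = R (u 0) := by
  have h : ∃ i, A.E (u i) = ∅ := ⟨0, hu⟩
  rw [payoff, dif_pos h, (Nat.find_eq_zero h).2 hu]

theorem payoff_congr {B : Arena S} (hE : ∀ i, A.E (u i) = B.E (u i))
    (hpri : ∀ i, pri (u i) = pri' (u i)) (hR : ∀ i, R (u i) = R' (u i)) :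
    payoff A pri R u = payoff B pri' R' u := by
  unfold payoff
  simp only [hE, hpri, hR]

theorem payoff_cut_stopAt_of_forall_notMem (hpri : Set.EqOn pri' pri Tᶜ)
    (hR : Set.EqOn R' R Tᶜ) (hu : ∀ i, u i ∉ T) :
    payoff (A.cut T) pri' R' (stopAt T u) = payoff A pri R u := by
  rw [show stopAt T u = u from funext fun i => stopAt_apply_of_forall_notMem fun j _ => hu j]
  exact payoff_congr (fun i => Arena.cut_E_of_notMem (hu i)) (fun i => hpri (hu i))
    fun i => hR (hu i)

theorem payoff_cut_stopAt_of_mem_cyl {h : List S} (hh : ∀ y ∈ h, y ∉ T ∧ A.E y ≠ ∅) (ht : t ∈ T)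
    (hu : u ∈ cyl (h ++ [t])) : payoff (A.cut T) pri' R' (stopAt T u) = R' t := by
  obtain ⟨hu', rfl⟩ := mem_cyl_concat.1 hu
  have before {i : ℕ} (hi : i < h.length) := hh (u i) (apply_mem_of_mem_cyl hu' hi)
  have stopAt_eq {i : ℕ} (hi : i ≤ h.length) : stopAt T u i = u i :=
    stopAt_apply_of_forall_notMem fun j hj => (before (hj.trans_le hi)).1
  have drop_zero : drop h.length (stopAt T u) 0 = u h.length := stopAt_eq le_rfl
  rw [← payoff_drop (n := h.length), payoff_of_E_eq_empty, drop_zero]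
  · rw [drop_zero, Arena.cut_E_of_mem ht]
  · intro i hi
    rw [stopAt_eq hi.le, Arena.cut_E_of_notMem (before hi).1]
    exact (before hi).2

/-- How much more a path pays in `A` than its stopped version pays in `A.cut T`. -/
def excessPayoff (A : Arena S) (T : Set S) (pri pri' : S → ℕ) (R R' : S → ℝ)
    (u : PathSpace S) : ℝ :=
  payoff A pri R u - payoff (A.cut T) pri' R' (stopAt T u)

theorem integrable_payoff_stopAt (hR : ∀ s, R s ∈ Set.Icc (0 : ℝ) 1)
    (μ : Measure (PathSpace S)) [IsFiniteMeasure μ] :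
    Integrable (fun u => payoff A pri R (stopAt T u)) μ :=
  (integrable_payoff hR (μ.map (stopAt T))).comp_measurable (measurable_stopAt T)

theorem integrable_excessPayoff (hR : ∀ s, R s ∈ Set.Icc (0 : ℝ) 1)
    (hR' : ∀ s, R' s ∈ Set.Icc (0 : ℝ) 1) (μ : Measure (PathSpace S)) [IsFiniteMeasure μ] :
    Integrable (excessPayoff A T pri pri' R R') μ :=
  (integrable_payoff hR μ).sub (integrable_payoff_stopAt hR' μ)

theorem excessPayoff_eq_zero (hpri : Set.EqOn pri' pri Tᶜ) (hRR' : Set.EqOn R' R Tᶜ)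
    (hu : ∀ i, u i ∉ T) : excessPayoff A T pri pri' R R' u = 0 :=
  sub_eq_zero.2 (payoff_cut_stopAt_of_forall_notMem hpri hRR' hu).symm

theorem integral_excessPayoff (hA : A.Wellformed) (hR : ∀ s, R s ∈ Set.Icc (0 : ℝ) 1)
    (hR' : ∀ s, R' s ∈ Set.Icc (0 : ℝ) 1) (h₁ : AgreeBefore T σ₁ τ₁) (h₂ : AgreeBefore T σ₂ τ₂) :
    ∫ u, excessPayoff A T pri pri' R R' u ∂pathMeasure A σ₁ σ₂ s₀ =
      expReward A pri R σ₁ σ₂ s₀ - expReward (A.cut T) pri' R' τ₁ τ₂ s₀ := by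
  have := isProbabilityMeasure_pathMeasure (σ₁ := σ₁) (σ₂ := σ₂) (s₀ := s₀) hA
  rw [expReward, expReward, ← map_stopAt_pathMeasure hA h₁ h₂,
    integral_map (measurable_stopAt T).aemeasurable
      (measurable_payoff _ _ _).aestronglyMeasurable]
  exact integral_sub (integrable_payoff hR _) (integrable_payoff_stopAt hR' _)

theorem setIntegral_cyl_excessPayoff (hA : A.Wellformed) (hR : ∀ s, R s ∈ Set.Icc (0 : ℝ) 1)
    (hR' : ∀ s, R' s ∈ Set.Icc (0 : ℝ) 1) {h : List S} (hh : ∀ y ∈ h, y ∉ T) (ht : t ∈ T)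
    (h0 : pathMeasure A σ₁ σ₂ s₀ (cyl (h ++ [t])) ≠ 0) :
    ∫ u in cyl (h ++ [t]), excessPayoff A T pri pri' R R' u ∂pathMeasure A σ₁ σ₂ s₀ =
      (pathMeasure A σ₁ σ₂ s₀).real (cyl (h ++ [t])) *
        (expReward A pri R (σ₁.shift h) (σ₂.shift h) t - R' t) := by
  have := isProbabilityMeasure_pathMeasure (σ₁ := σ₁) (σ₂ := σ₂) (s₀ := s₀) hA
  have hE : ∀ y ∈ h, A.E y ≠ ∅ := fun y hy hyE =>
    hh y hy (eq_of_pathMeasure_cyl_concat_ne_zero hA h0 hy hyE ▸ ht)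
  have cut_eq : ∀ u ∈ cyl (h ++ [t]), payoff (A.cut T) pri' R' (stopAt T u) = R' t :=
    fun u => payoff_cut_stopAt_of_mem_cyl (fun y hy => ⟨hh y hy, hE y hy⟩) ht
  unfold excessPayoff
  rw [integral_sub (integrable_payoff hR _) (integrable_payoff_stopAt hR' _),
    setIntegral_cyl_payoff hA hE, setIntegral_congr_fun (measurableSet_cyl _) cut_eq,
    setIntegral_const, smul_eq_mul, mul_sub]

variable {ε : ℝ}

theorem expReward_le_expReward_cut_add (hA : A.Wellformed) (hR : ∀ s, R s ∈ Set.Icc (0 : ℝ) 1)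
    (hR' : ∀ s, R' s ∈ Set.Icc (0 : ℝ) 1) (hpri : Set.EqOn pri' pri Tᶜ) (hRR' : Set.EqOn R' R Tᶜ)
    (h₁ : AgreeBefore T σ₁ τ₁) (h₂ : AgreeBefore T σ₂ τ₂) (hε : 0 ≤ ε)
    (visit : ∀ h t, (∀ y ∈ h, y ∉ T) → t ∈ T →
      expReward A pri R (σ₁.shift h) (σ₂.shift h) t ≤ R' t + ε) :
    expReward A pri R σ₁ σ₂ s₀ ≤ expReward (A.cut T) pri' R' τ₁ τ₂ s₀ + ε := by
  have := isProbabilityMeasure_pathMeasure (σ₁ := σ₁) (σ₂ := σ₂) (s₀ := s₀) hA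
  rw [← sub_le_iff_le_add', ← integral_excessPayoff hA hR hR' h₁ h₂]
  refine (isTreeWeight_historyWeight hA).integral_le_of_firstVisits (pathMeasure_cyl hA)
    (integrable_excessPayoff hR hR' _)
    (fun u hu => (excessPayoff_eq_zero hpri hRR' hu).trans_le hε) ?_
  rintro _ ⟨h, t, rfl, hh, ht⟩ h0
  rw [setIntegral_cyl_excessPayoff hA hR hR' hh ht h0]
  exact mul_le_mul_of_nonneg_left (sub_le_iff_le_add'.2 (visit h t hh ht)) measureReal_nonneg

theorem expReward_cut_le_expReward_add (hA : A.Wellformed) (hR : ∀ s, R s ∈ Set.Icc (0 : ℝ) 1)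
    (hR' : ∀ s, R' s ∈ Set.Icc (0 : ℝ) 1) (hpri : Set.EqOn pri' pri Tᶜ) (hRR' : Set.EqOn R' R Tᶜ)
    (h₁ : AgreeBefore T σ₁ τ₁) (h₂ : AgreeBefore T σ₂ τ₂) (hε : 0 ≤ ε)
    (visit : ∀ h t, (∀ y ∈ h, y ∉ T) → t ∈ T →
      R' t ≤ expReward A pri R (σ₁.shift h) (σ₂.shift h) t + ε) :
    expReward (A.cut T) pri' R' τ₁ τ₂ s₀ ≤ expReward A pri R σ₁ σ₂ s₀ + ε := by
  have := isProbabilityMeasure_pathMeasure (σ₁ := σ₁) (σ₂ := σ₂) (s₀ := s₀) hA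
  rw [← sub_le_iff_le_add', ← neg_sub, ← integral_excessPayoff hA hR hR' h₁ h₂, ← integral_neg]
  refine (isTreeWeight_historyWeight hA).integral_le_of_firstVisits (pathMeasure_cyl hA)
    (integrable_excessPayoff hR hR' _).neg
    (fun u hu => (neg_eq_zero.2 (excessPayoff_eq_zero hpri hRR' hu)).trans_le hε) ?_
  rintro _ ⟨h, t, rfl, hh, ht⟩ h0
  rw [integral_neg', setIntegral_cyl_excessPayoff hA hR hR' hh ht h0, ← mul_neg, neg_sub]
  exact mul_le_mul_of_nonneg_left (sub_le_iff_le_add'.2 (visit h t hh ht)) measureReal_nonneg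

end Cut

/-! ### Switching strategies at the first visit -/

section Switch

variable {A : Arena S} {T : Set S} {pl : Player}

/-- A strategy of `A`, used in `A.cut T`. -/
def Strategy.toCut (τ : Strategy A pl) (T : Set S) : Strategy (A.cut T) pl where
  next := τ.next
  valid l s ho hE := by
    have hs : s ∉ T := fun hs => hE (Arena.cut_E_of_mem hs)
    rw [Arena.cut_E_of_notMem hs] at hE ⊢
    exact τ.valid l s (Arena.cut_owner_of_notMem hs ▸ ho) hE

/-- The strategy of `A` that plays `τ` until the first visit to `T` and, if the play has then
followed `h` to `t ∈ T`, forgets `h` and plays `κ h t` from `t` on. -/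
def Strategy.switch (τ : Strategy (A.cut T) pl) (κ : List S → S → Strategy A pl) :
    Strategy A pl where
  next l s :=
    match (l ++ [s]).dropWhile (· ∉ T) with
    | [] => τ.next l s
    | t :: r => (κ ((l ++ [s]).takeWhile (· ∉ T)) t).next (t :: r).dropLast s
  valid l s ho hE := by
    split
    case h_1 h =>
      have hs : s ∉ T := by simpa using List.dropWhile_eq_nil_iff.1 h s List.mem_concat_self
      have valid := τ.valid l s
      rw [Arena.cut_owner_of_notMem hs, Arena.cut_E_of_notMem hs] at valid
      exact valid ho hE
    case h_2 => exact (κ _ _).valid _ s ho hE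

theorem Strategy.agreeBefore_toCut (τ : Strategy A pl) : AgreeBefore T τ (τ.toCut T) :=
  fun _ _ _ => rfl

variable (τ : Strategy (A.cut T) pl) (κ : List S → S → Strategy A pl)

theorem Strategy.agreeBefore_switch : AgreeBefore T (τ.switch κ) τ := fun l s hl => by
  have dropWhile_eq : (l ++ [s]).dropWhile (· ∉ T) = [] :=
    List.dropWhile_eq_nil_iff.2 fun y hy => decide_eq_true (hl y hy)
  simp only [switch, dropWhile_eq]

theorem Strategy.shift_switch_next {h : List S} {t : S} (hh : ∀ y ∈ h, y ∉ T) (ht : t ∈ T)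
    {l : List S} {s : S} (hl : (l ++ [s]).head? = some t) :
    ((τ.switch κ).shift h).next l s = (κ h t).next l s := by
  obtain ⟨r, hr⟩ := List.head?_eq_some_iff.1 hl
  have hp : ∀ y ∈ h, decide (y ∉ T) = true := fun y hy => decide_eq_true (hh y hy)
  have dropWhile_eq : (h ++ l ++ [s]).dropWhile (· ∉ T) = t :: r := by
    rw [List.append_assoc, hr, List.dropWhile_append_of_pos hp, List.dropWhile_cons_of_neg]
    simpa using ht
  have takeWhile_eq : (h ++ l ++ [s]).takeWhile (· ∉ T) = h := by
    rw [List.append_assoc, hr, List.takeWhile_append_of_pos hp, List.takeWhile_cons_of_neg,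
      List.append_nil]
    simpa using ht
  simp only [shift, switch, dropWhile_eq, takeWhile_eq]
  rw [← hr, List.dropLast_concat]

variable {pri pri' : S → ℕ} {R R' : S → ℝ} {ε : ℝ} {s₀ : S}

theorem expReward_cut_le_expReward_switch_add (hA : A.Wellformed)
    (hR : ∀ s, R s ∈ Set.Icc (0 : ℝ) 1) (hR' : ∀ s, R' s ∈ Set.Icc (0 : ℝ) 1)
    (hpri : Set.EqOn pri' pri Tᶜ) (hRR' : Set.EqOn R' R Tᶜ)
    (τ₁ : Strategy (A.cut T) Player.one) (σ₂ : Strategy A Player.two)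
    (κ : List S → S → Strategy A Player.one) (hε : 0 ≤ ε)
    (hκ : ∀ h, ∀ t ∈ T, R' t ≤ expReward A pri R (κ h t) (σ₂.shift h) t + ε) :
    expReward (A.cut T) pri' R' τ₁ (σ₂.toCut T) s₀ ≤
      expReward A pri R (τ₁.switch κ) σ₂ s₀ + ε := by
  refine expReward_cut_le_expReward_add hA hR hR' hpri hRR' (τ₁.agreeBefore_switch κ)
    σ₂.agreeBefore_toCut hε fun h t hh ht => ?_
  rw [expReward, pathMeasure_congr hA (fun _ _ => τ₁.shift_switch_next κ hh ht) fun _ _ _ => rfl]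
  exact hκ h t ht

theorem expReward_switch_le_expReward_cut_add (hA : A.Wellformed)
    (hR : ∀ s, R s ∈ Set.Icc (0 : ℝ) 1) (hR' : ∀ s, R' s ∈ Set.Icc (0 : ℝ) 1)
    (hpri : Set.EqOn pri' pri Tᶜ) (hRR' : Set.EqOn R' R Tᶜ)
    (σ₁ : Strategy A Player.one) (τ₂ : Strategy (A.cut T) Player.two)
    (κ : List S → S → Strategy A Player.two) (hε : 0 ≤ ε)
    (hκ : ∀ h, ∀ t ∈ T, expReward A pri R (σ₁.shift h) (κ h t) t ≤ R' t + ε) :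
    expReward A pri R σ₁ (τ₂.switch κ) s₀ ≤
      expReward (A.cut T) pri' R' (σ₁.toCut T) τ₂ s₀ + ε := by
  refine expReward_le_expReward_cut_add hA hR hR' hpri hRR' σ₁.agreeBefore_toCut
    (τ₂.agreeBefore_switch κ) hε fun h t hh ht => ?_
  rw [expReward, pathMeasure_congr hA (fun _ _ _ => rfl) fun _ _ => τ₂.shift_switch_next κ hh ht]
  exact hκ h t ht

end Switch

/-! ### Values -/

section Minimax

theorem neg_ciSup_eq_ciInf_neg {ι : Sort*} (g : ι → ℝ) : -⨆ i, g i = ⨅ i, -g i := by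
  rw [iSup, iInf, ← Real.sInf_neg, ← Set.image_neg_eq_neg, ← Set.range_comp]; rfl

theorem ciInf_ciSup_eq_neg_ciSup_ciInf_neg {α β : Sort*} (f : α → β → ℝ) :
    ⨅ b, ⨆ a, f a b = -⨆ b, ⨅ a, -f a b := by
  simp only [← neg_ciSup_eq_ciInf_neg]
  rw [neg_ciSup_eq_ciInf_neg]
  simp only [neg_neg]

variable {α β : Sort*} {f : α → β → ℝ} {m M x : ℝ}

theorem bddBelow_range_of_mem_Icc {g : β → ℝ} (hg : ∀ b, g b ∈ Set.Icc m M) :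
    BddBelow (Set.range g) :=
  ⟨m, Set.forall_mem_range.2 fun b => (hg b).1⟩

theorem bddAbove_range_ciInf [Nonempty β] (hf : ∀ a b, f a b ∈ Set.Icc m M) :
    BddAbove (Set.range fun a => ⨅ b, f a b) :=
  ⟨M, Set.forall_mem_range.2 fun a => (ciInf_le (bddBelow_range_of_mem_Icc (hf a))
    (Classical.arbitrary β)).trans (hf a _).2⟩

variable [Nonempty α] [Nonempty β]

theorem le_ciSup_ciInf_iff (hf : ∀ a b, f a b ∈ Set.Icc m M) :
    x ≤ ⨆ a, ⨅ b, f a b ↔ ∀ ε > 0, ∃ a, ∀ b, x ≤ f a b + ε := by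
  refine ⟨fun h ε hε => ?_, fun h => le_of_forall_pos_le_add fun ε hε => ?_⟩
  · obtain ⟨a, ha⟩ := exists_lt_of_lt_ciSup ((sub_lt_self x hε).trans_le h)
    exact ⟨a, fun b => sub_le_iff_le_add.1
      (ha.le.trans (ciInf_le (bddBelow_range_of_mem_Icc (hf a)) b))⟩
  · obtain ⟨a, ha⟩ := h ε hε
    exact sub_le_iff_le_add.1
      ((le_ciInf fun b => sub_le_iff_le_add.2 (ha b)).trans (le_ciSup (bddAbove_range_ciInf hf) a))

theorem ciSup_ciInf_le_iff (hf : ∀ a b, f a b ∈ Set.Icc m M) :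
    ⨆ a, ⨅ b, f a b ≤ x ↔ ∀ ε > 0, ∀ a, ∃ b, f a b ≤ x + ε := by
  refine ⟨fun h ε hε a => ?_, fun h => le_of_forall_pos_le_add fun ε hε => ciSup_le fun a => ?_⟩
  · obtain ⟨b, hb⟩ := exists_lt_of_ciInf_lt
      (((le_ciSup (bddAbove_range_ciInf hf) a).trans h).trans_lt (lt_add_of_pos_right x hε))
    exact ⟨b, hb.le⟩
  · obtain ⟨b, hb⟩ := h ε hε a
    exact (ciInf_le (bddBelow_range_of_mem_Icc (hf a)) b).trans hb

theorem le_ciInf_ciSup_iff (hf : ∀ a b, f a b ∈ Set.Icc m M) :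
    x ≤ ⨅ b, ⨆ a, f a b ↔ ∀ ε > 0, ∀ b, ∃ a, x ≤ f a b + ε := by
  rw [ciInf_ciSup_eq_neg_ciSup_ciInf_neg, le_neg, ciSup_ciInf_le_iff (f := fun b a => -f a b)
    fun b a => ⟨neg_le_neg (hf a b).2, neg_le_neg (hf a b).1⟩]
  refine forall₂_congr fun ε _ => forall_congr' fun b => exists_congr fun a => ?_
  rw [neg_le, neg_add', neg_neg, sub_le_iff_le_add]

theorem ciInf_ciSup_le_iff (hf : ∀ a b, f a b ∈ Set.Icc m M) :
    ⨅ b, ⨆ a, f a b ≤ x ↔ ∀ ε > 0, ∃ b, ∀ a, f a b ≤ x + ε := by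
  rw [ciInf_ciSup_eq_neg_ciSup_ciInf_neg, neg_le, le_ciSup_ciInf_iff (f := fun b a => -f a b)
    fun b a => ⟨neg_le_neg (hf a b).2, neg_le_neg (hf a b).1⟩]
  refine forall₂_congr fun ε _ => exists_congr fun b => forall_congr' fun a => ?_
  rw [neg_le_iff_add_nonneg, neg_add_eq_sub, ← add_sub_right_comm, sub_nonneg, add_comm ε]

end Minimax

section Values

open MeasureTheory

variable {A : Arena S} {pri pri' : S → ℕ} {R R' : S → ℝ} {s t : S}

instance (A : Arena S) (pl : Player) : Nonempty (Strategy A pl) := by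
  refine ⟨⟨fun _ s => if h : (A.E s).Nonempty then h.choose else s, fun _ s _ hE => ?_⟩⟩
  have h := Set.nonempty_iff_ne_empty.2 hE
  rw [dif_pos h]
  exact h.choose_spec

theorem le_lowerValue_iff (hA : A.Wellformed) (hR : ∀ s, R s ∈ Set.Icc (0 : ℝ) 1) {x : ℝ} :
    x ≤ lowerValue A pri R s ↔ ∀ ε > 0, ∃ σ₁, ∀ σ₂, x ≤ expReward A pri R σ₁ σ₂ s + ε :=
  le_ciSup_ciInf_iff fun σ₁ σ₂ => expReward_mem_Icc hA hR σ₁ σ₂ s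

theorem lowerValue_le_iff (hA : A.Wellformed) (hR : ∀ s, R s ∈ Set.Icc (0 : ℝ) 1) {x : ℝ} :
    lowerValue A pri R s ≤ x ↔ ∀ ε > 0, ∀ σ₁, ∃ σ₂, expReward A pri R σ₁ σ₂ s ≤ x + ε :=
  ciSup_ciInf_le_iff fun σ₁ σ₂ => expReward_mem_Icc hA hR σ₁ σ₂ s

theorem le_upperValue_iff (hA : A.Wellformed) (hR : ∀ s, R s ∈ Set.Icc (0 : ℝ) 1) {x : ℝ} :
    x ≤ upperValue A pri R s ↔ ∀ ε > 0, ∀ σ₂, ∃ σ₁, x ≤ expReward A pri R σ₁ σ₂ s + ε :=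
  le_ciInf_ciSup_iff fun σ₁ σ₂ => expReward_mem_Icc hA hR σ₁ σ₂ s

theorem upperValue_le_iff (hA : A.Wellformed) (hR : ∀ s, R s ∈ Set.Icc (0 : ℝ) 1) {x : ℝ} :
    upperValue A pri R s ≤ x ↔ ∀ ε > 0, ∃ σ₂, ∀ σ₁, expReward A pri R σ₁ σ₂ s ≤ x + ε :=
  ciInf_ciSup_le_iff fun σ₁ σ₂ => expReward_mem_Icc hA hR σ₁ σ₂ s

theorem lowerValue_le_upperValue (hA : A.Wellformed) (hR : ∀ s, R s ∈ Set.Icc (0 : ℝ) 1) :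
    lowerValue A pri R s ≤ upperValue A pri R s :=
  (lowerValue_le_iff hA hR).2 fun ε hε σ₁ =>
    ((upperValue_le_iff hA hR).1 le_rfl ε hε).imp fun _ h => h σ₁

theorem lowerValue_mem_Icc (hA : A.Wellformed) (hR : ∀ s, R s ∈ Set.Icc (0 : ℝ) 1) :
    lowerValue A pri R s ∈ Set.Icc (0 : ℝ) 1 :=
  ⟨(le_lowerValue_iff hA hR).2 fun _ hε => ⟨Classical.arbitrary _, fun σ₂ =>
      add_nonneg (expReward_mem_Icc hA hR _ σ₂ s).1 hε.le⟩,
    (lowerValue_le_iff hA hR).2 fun _ hε σ₁ => ⟨Classical.arbitrary _,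
      (expReward_mem_Icc hA hR σ₁ _ s).2.trans (le_add_of_nonneg_right hε.le)⟩⟩

theorem upperValue_mem_Icc (hA : A.Wellformed) (hR : ∀ s, R s ∈ Set.Icc (0 : ℝ) 1) :
    upperValue A pri R s ∈ Set.Icc (0 : ℝ) 1 :=
  ⟨(lowerValue_mem_Icc hA hR).1.trans (lowerValue_le_upperValue hA hR),
    (upperValue_le_iff hA hR).2 fun _ hε => ⟨Classical.arbitrary _, fun σ₁ =>
      (expReward_mem_Icc hA hR σ₁ _ s).2.trans (le_add_of_nonneg_right hε.le)⟩⟩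

variable {T : Set S}

theorem lowerValue_cut (hA : A.Wellformed) (hR : ∀ s, R s ∈ Set.Icc (0 : ℝ) 1)
    (hR' : ∀ s, R' s ∈ Set.Icc (0 : ℝ) 1) (hpri : Set.EqOn pri' pri Tᶜ) (hRR' : Set.EqOn R' R Tᶜ)
    (hT : Set.EqOn R' (lowerValue A pri R) T) :
    lowerValue (A.cut T) pri' R' s = lowerValue A pri R s := by
  refine le_antisymm ((le_lowerValue_iff hA hR).2 fun ε hε => ?_)
    ((lowerValue_le_iff hA hR).2 fun ε hε σ₁ => ?_)
  · obtain ⟨τ₁, hτ₁⟩ :=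
      (le_lowerValue_iff (pri := pri') (s := s) (hA.cut T) hR').1 le_rfl (ε / 2) (half_pos hε)
    choose κ hκ using fun (t : S) =>
      (le_lowerValue_iff (pri := pri) (s := t) hA hR).1 le_rfl (ε / 2) (half_pos hε)
    refine ⟨τ₁.switch fun _ t => κ t, fun σ₂ => ?_⟩
    have := expReward_cut_le_expReward_switch_add (s₀ := s) hA hR hR' hpri hRR' τ₁ σ₂
      (fun _ t => κ t) (half_pos hε).le fun h t ht => (hT ht).trans_le (hκ t (σ₂.shift h))
    linarith [hτ₁ (σ₂.toCut T)]
  · obtain ⟨τ₂, hτ₂⟩ :=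
      (lowerValue_le_iff (pri := pri') (s := s) (hA.cut T) hR').1 le_rfl (ε / 2) (half_pos hε)
        (σ₁.toCut T)
    choose κ hκ using fun (h : List S) (t : S) =>
      (lowerValue_le_iff (pri := pri) (s := t) hA hR).1 le_rfl (ε / 2) (half_pos hε) (σ₁.shift h)
    refine ⟨τ₂.switch κ, ?_⟩
    have := expReward_switch_le_expReward_cut_add (s₀ := s) hA hR hR' hpri hRR' σ₁ τ₂ κ
      (half_pos hε).le fun h t ht => (hT ht).symm ▸ hκ h t
    linarith

theorem upperValue_cut (hA : A.Wellformed) (hR : ∀ s, R s ∈ Set.Icc (0 : ℝ) 1)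
    (hR' : ∀ s, R' s ∈ Set.Icc (0 : ℝ) 1) (hpri : Set.EqOn pri' pri Tᶜ) (hRR' : Set.EqOn R' R Tᶜ)
    (hT : Set.EqOn R' (upperValue A pri R) T) :
    upperValue (A.cut T) pri' R' s = upperValue A pri R s := by
  refine le_antisymm ((le_upperValue_iff hA hR).2 fun ε hε σ₂ => ?_)
    ((upperValue_le_iff hA hR).2 fun ε hε => ?_)
  · obtain ⟨τ₁, hτ₁⟩ :=
      (le_upperValue_iff (pri := pri') (s := s) (hA.cut T) hR').1 le_rfl (ε / 2) (half_pos hε)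
        (σ₂.toCut T)
    choose κ hκ using fun (h : List S) (t : S) =>
      (le_upperValue_iff (pri := pri) (s := t) hA hR).1 le_rfl (ε / 2) (half_pos hε) (σ₂.shift h)
    refine ⟨τ₁.switch κ, ?_⟩
    have := expReward_cut_le_expReward_switch_add (s₀ := s) hA hR hR' hpri hRR' τ₁ σ₂ κ
      (half_pos hε).le fun h t ht => (hT ht).trans_le (hκ h t)
    linarith
  · obtain ⟨τ₂, hτ₂⟩ :=
      (upperValue_le_iff (pri := pri') (s := s) (hA.cut T) hR').1 le_rfl (ε / 2) (half_pos hε)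
    choose κ hκ using fun (t : S) =>
      (upperValue_le_iff (pri := pri) (s := t) hA hR).1 le_rfl (ε / 2) (half_pos hε)
    refine ⟨τ₂.switch fun _ t => κ t, fun σ₁ => ?_⟩
    have := expReward_switch_le_expReward_cut_add (s₀ := s) hA hR hR' hpri hRR' σ₁ τ₂
      (fun _ t => κ t) (half_pos hε).le fun h t ht => (hT ht).symm ▸ hκ t (σ₁.shift h)
    linarith [hτ₂ (σ₁.toCut T)]

variable {σ₁ : Strategy A Player.one} {σ₂ : Strategy A Player.two}

theorem stepWeight_of_E_eq_singleton (hA : A.Wellformed) (hE : A.E s = {t}) (l : List S) :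
    stepWeight A σ₁ σ₂ l s t = 1 := by
  have hE' : A.E s ≠ ∅ := hE ▸ Set.singleton_ne_empty t
  rw [stepWeight, if_neg hE']
  cases ho : A.owner s with
  | one => exact if_pos (hE ▸ σ₁.valid l s ho hE' : σ₁.next l s ∈ ({t} : Set S)).symm
  | two => exact if_pos (hE ▸ σ₂.valid l s ho hE' : σ₂.next l s ∈ ({t} : Set S)).symm
  | nature =>
    change A.prob s t = 1
    obtain ⟨-, hsum, hsupp⟩ := hA s ho
    exact (hasSum_single (f := A.prob s) t fun r hr => Function.notMem_support.1 fun h =>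
      hr (by rwa [← hsupp, hE] at h)).unique hsum

theorem expReward_of_E_eq_singleton (hA : A.Wellformed) (hE : A.E s = {t}) :
    expReward A pri R σ₁ σ₂ s = expReward A pri R (σ₁.shift [s]) (σ₂.shift [s]) t := by
  have := isProbabilityMeasure_pathMeasure (σ₁ := σ₁) (σ₂ := σ₂) (s₀ := s) hA
  have measure_cyl : pathMeasure A σ₁ σ₂ s (cyl ([s] ++ [t])) = 1 := by
    simpa [pathMeasure_cyl_singleton hA, stepWeight_of_E_eq_singleton hA hE] using
      pathMeasure_cyl_concat (σ₁ := σ₁) (σ₂ := σ₂) (s₀ := s) hA [] s t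
  have ae_mem : ∀ᵐ u ∂pathMeasure A σ₁ σ₂ s, u ∈ cyl ([s] ++ [t]) :=
    (mem_ae_iff_prob_eq_one (measurableSet_cyl _)).2 measure_cyl
  have setIntegral := setIntegral_cyl_payoff (pri := pri) (R := R) (σ₁ := σ₁) (σ₂ := σ₂) (s₀ := s)
    (s := t) hA (List.forall_mem_singleton.2 (hE ▸ Set.singleton_ne_empty t))
  rwa [measureReal_def, measure_cyl, ENNReal.toReal_one, one_mul,
    Measure.restrict_eq_self_of_ae_mem ae_mem] at setIntegral

theorem Strategy.surjective_shift_singleton {pl : Player} (s : S) :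
    Function.Surjective fun τ : Strategy A pl => τ.shift [s] := fun τ =>
  ⟨⟨fun l r => τ.next l.tail r, fun l r => τ.valid l.tail r⟩, rfl⟩

theorem lowerValue_of_E_eq_singleton (hA : A.Wellformed) (hE : A.E s = {t}) :
    lowerValue A pri R s = lowerValue A pri R t :=
  calc lowerValue A pri R s
    _ = ⨆ σ₁ : Strategy A Player.one, ⨅ σ₂ : Strategy A Player.two,
          expReward A pri R (σ₁.shift [s]) (σ₂.shift [s]) t :=
      iSup_congr fun _ => iInf_congr fun _ => expReward_of_E_eq_singleton hA hE
    _ = ⨆ σ₁ : Strategy A Player.one, ⨅ σ₂ : Strategy A Player.two,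
          expReward A pri R (σ₁.shift [s]) σ₂ t :=
      iSup_congr fun σ₁ => (Strategy.surjective_shift_singleton s).iInf_comp
        fun σ₂ => expReward A pri R (σ₁.shift [s]) σ₂ t
    _ = lowerValue A pri R t := (Strategy.surjective_shift_singleton s).iSup_comp
      fun σ₁ => ⨅ σ₂, expReward A pri R σ₁ σ₂ t

theorem upperValue_of_E_eq_singleton (hA : A.Wellformed) (hE : A.E s = {t}) :
    upperValue A pri R s = upperValue A pri R t :=
  calc upperValue A pri R s
    _ = ⨅ σ₂ : Strategy A Player.two, ⨆ σ₁ : Strategy A Player.one,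
          expReward A pri R (σ₁.shift [s]) (σ₂.shift [s]) t :=
      iInf_congr fun _ => iSup_congr fun _ => expReward_of_E_eq_singleton hA hE
    _ = ⨅ σ₂ : Strategy A Player.two, ⨆ σ₁ : Strategy A Player.one,
          expReward A pri R σ₁ (σ₂.shift [s]) t :=
      iInf_congr fun σ₂ => (Strategy.surjective_shift_singleton s).iSup_comp
        fun σ₁ => expReward A pri R σ₁ (σ₂.shift [s]) t
    _ = upperValue A pri R t := (Strategy.surjective_shift_singleton s).iInf_comp
      fun σ₂ => ⨆ σ₁, expReward A pri R σ₁ σ₂ t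

end Values

/-! ### The games of the probabilistic μ-calculus -/

namespace pLmu

variable {L : Type}

theorem bodyOf_eq_none {G : pLmu L} {X : ℕ} (hX : X ∉ G.binders) : G.bodyOf X = none := by
  induction G with
  | var => rfl
  | dia _ _ ih | box _ _ ih => exact ih hX
  | or _ _ ihG ihH | and _ _ ihG ihH =>
    simp only [binders, List.mem_append, not_or] at hX
    simp [bodyOf, ihG hX.1, ihH hX.2]
  | mu _ _ ih | nu _ _ ih =>
    simp only [binders, List.mem_cons, not_or] at hX
    simp [bodyOf, ih hX.2, Ne.symm hX.1]

theorem varInfo_eq_none {G : pLmu L} {X : ℕ} (hX : X ∉ G.binders) (d : ℕ) :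
    G.varInfo d X = none := by
  induction G generalizing d with
  | var => rfl
  | dia _ _ ih | box _ _ ih => exact ih hX _
  | or _ _ ihG ihH | and _ _ ihG ihH =>
    simp only [binders, List.mem_append, not_or] at hX
    simp [varInfo, ihG hX.1, ihH hX.2]
  | mu _ _ ih | nu _ _ ih =>
    simp only [binders, List.mem_cons, not_or] at hX
    simp [varInfo, ih hX.2, Ne.symm hX.1]

theorem varInfo_succ (G : pLmu L) (d X : ℕ) :
    G.varInfo (d + 1) X = (G.varInfo d X).map (Prod.map Nat.succ id) := by
  induction G generalizing d with
  | var => rfl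
  | dia _ _ ih | box _ _ ih => exact ih _
  | or G _ ihG ihH | and G _ ihG ihH =>
    simp only [varInfo]
    rw [ihG, ihH]
    cases G.varInfo (d + 1) X <;> rfl
  | mu _ _ ih | nu _ _ ih =>
    simp only [varInfo]
    split_ifs
    · rfl
    · exact ih _

end pLmu

section Games

variable {L P : Type}

/-- The states `⟨q, X⟩` of the games of formulas, at which the fixed point of `X` is unfolded. -/
def varStates (L P : Type) (X : ℕ) : Set (GState L P) := Set.range fun q => (Sum.inl q, .var X)

theorem gameArena_prob_inr (M : PLTS L P) (F G : pLmu L) (d : PDist P) :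
    (gameArena M F).prob (Sum.inr d, G) = Function.extend (fun q => (Sum.inl q, G)) d.f 0 := by
  have inj : Function.Injective fun q : P => ((Sum.inl q, G) : GState L P) := fun p q h => by
    simpa using h
  ext ⟨q | e, H⟩
  · by_cases h : H = G
    · subst h
      rw [inj.extend_apply d.f 0 q]
      exact if_pos rfl
    · rw [Function.extend_apply' _ _ _ fun ⟨_, hq⟩ => h (congrArg Prod.snd hq).symm]
      exact if_neg h
  · rw [Function.extend_apply' _ _ _ fun ⟨_, hq⟩ => Sum.inl_ne_inr (congrArg Prod.fst hq)]
    rfl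

theorem wellformed_gameArena (M : PLTS L P) (F : pLmu L) : (gameArena M F).Wellformed := by
  rintro ⟨p | d, G⟩ ho
  · cases G <;> simp only [gameArena, reduceCtorEq] at ho
    split at ho <;> simp at ho
  · have inj : Function.Injective fun q : P => ((Sum.inl q, G) : GState L P) := fun p q h => by
      simpa using h
    rw [gameArena_prob_inr, hasSum_extend_zero inj, Function.support_extend_zero inj]
    exact ⟨fun t => Function.extend_nonneg (g := d.f) d.nonneg le_rfl t, d.sum_one, rfl⟩

theorem gameR_mem_Icc (F : pLmu L) (ρ : ℕ → P → unitInterval) (s : GState L P) :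
    gameR F ρ s ∈ Set.Icc (0 : ℝ) 1 := by
  rcases s with ⟨p | _, G⟩
  · cases G with
    | var Y => exact (ρ Y p).2
    | _ => simp [gameR]
  · simp [gameR]

variable {G : pLmu L} {X : ℕ}

theorem gameArena_mu_E_var (M : PLTS L P) (G : pLmu L) (X : ℕ) (q : P) :
    (gameArena M (.mu X G)).E (Sum.inl q, .var X) = {(Sum.inl q, G)} := by
  simp [gameArena, pLmu.bodyOf]

theorem gameArena_E_eq (M : PLTS L P) (hX : X ∉ G.binders) (s : GState L P) :
    (gameArena M G).E s = if s ∈ varStates L P X then ∅ else (gameArena M (.mu X G)).E s := by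
  split_ifs with hs
  · obtain ⟨q, rfl⟩ := hs
    simp [gameArena, pLmu.bodyOf_eq_none hX]
  · rcases s with ⟨p | d, H⟩
    · cases H with
      | var Y =>
        have h : X ≠ Y := fun h => hs ⟨p, h ▸ rfl⟩
        simp [gameArena, pLmu.bodyOf, h]
      | _ => rfl
    · rfl

theorem gameArena_owner_eq (M : PLTS L P) (hX : X ∉ G.binders) (s : GState L P) :
    (gameArena M G).owner s =
      if s ∈ varStates L P X then Player.one else (gameArena M (.mu X G)).owner s := by
  split_ifs with hs
  · obtain ⟨q, rfl⟩ := hs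
    simp [gameArena, pLmu.varInfo_eq_none hX]
  · rcases s with ⟨p | d, H⟩
    · cases H with
      | var Y =>
        have h : X ≠ Y := fun h => hs ⟨p, h ▸ rfl⟩
        simp only [gameArena, pLmu.varInfo, if_neg h, pLmu.varInfo_succ]
        rcases G.varInfo 0 Y with _ | ⟨d, _ | _⟩ <;> rfl
      | _ => rfl
    · rfl

theorem gameArena_eq_cut (M : PLTS L P) (hX : X ∉ G.binders) :
    gameArena M G = (gameArena M (.mu X G)).cut (varStates L P X) :=
  congrArg₂ (Arena.mk · · (gameArena M G).prob) (funext (gameArena_E_eq M hX))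
    (funext (gameArena_owner_eq M hX))

theorem gamePri_eqOn (G : pLmu L) (X : ℕ) :
    Set.EqOn (gamePri G) (gamePri (.mu X G)) (varStates L P X)ᶜ := by
  rintro ⟨p | d, H⟩ hs
  · cases H with
    | var Y =>
      have h : X ≠ Y := fun h => hs ⟨p, h ▸ rfl⟩
      simp only [gamePri, pLmu.varInfo, if_neg h, pLmu.varInfo_succ, pLmu.size]
      rcases G.varInfo 0 Y with _ | ⟨d, _ | _⟩ <;> simp
    | _ => rfl
  · rfl

theorem gameR_update_eqOn (ρ : ℕ → P → unitInterval) (f : P → unitInterval) :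
    Set.EqOn (gameR G (Function.update ρ X f)) (gameR (.mu X G) ρ) (varStates L P X)ᶜ := by
  rintro ⟨p | d, H⟩ hs
  · cases H with
    | var Y =>
      have h : Y ≠ X := fun h => hs ⟨p, h ▸ rfl⟩
      simp [gameR, Function.update_of_ne h]
    | _ => rfl
  · rfl

theorem lowerValue_gameArena_update (M : PLTS L P) (hX : X ∉ G.binders)
    (ρ : ℕ → P → unitInterval) {f : P → unitInterval}
    (hf : ∀ p, (f p : ℝ) = lowerValue (gameArena M (.mu X G)) (gamePri (.mu X G))
      (gameR (.mu X G) ρ) (Sum.inl p, G)) (s : GState L P) :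
    lowerValue (gameArena M G) (gamePri G) (gameR G (Function.update ρ X f)) s =
      lowerValue (gameArena M (.mu X G)) (gamePri (.mu X G)) (gameR (.mu X G) ρ) s := by
  rw [gameArena_eq_cut M hX]
  refine lowerValue_cut (wellformed_gameArena M _) (gameR_mem_Icc _ _) (gameR_mem_Icc _ _)
    (gamePri_eqOn G X) (gameR_update_eqOn ρ f) ?_
  rintro _ ⟨q, rfl⟩
  rw [lowerValue_of_E_eq_singleton (wellformed_gameArena M _) (gameArena_mu_E_var M G X q), ← hf]
  simp [gameR]

theorem upperValue_gameArena_update (M : PLTS L P) (hX : X ∉ G.binders)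
    (ρ : ℕ → P → unitInterval) {f : P → unitInterval}
    (hf : ∀ p, (f p : ℝ) = upperValue (gameArena M (.mu X G)) (gamePri (.mu X G))
      (gameR (.mu X G) ρ) (Sum.inl p, G)) (s : GState L P) :
    upperValue (gameArena M G) (gamePri G) (gameR G (Function.update ρ X f)) s =
      upperValue (gameArena M (.mu X G)) (gamePri (.mu X G)) (gameR (.mu X G) ρ) s := by
  rw [gameArena_eq_cut M hX]
  refine upperValue_cut (wellformed_gameArena M _) (gameR_mem_Icc _ _) (gameR_mem_Icc _ _)
    (gamePri_eqOn G X) (gameR_update_eqOn ρ f) ?_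
  rintro _ ⟨q, rfl⟩
  rw [upperValue_of_E_eq_singleton (wellformed_gameArena M _) (gameArena_mu_E_var M G X q), ← hf]
  simp [gameR]

end Games

/-! ### The fixed points -/

section FixedPoints

variable {L P : Type} {M : PLTS L P} {G : pLmu L} {X : ℕ} {ρ : ℕ → P → unitInterval}
  {f : P → unitInterval}

theorem sem_mu_le (hf : pLmu.sem M G (Function.update ρ X f) = f) :
    pLmu.sem M (.mu X G) ρ ≤ f :=
  sInf_le hf.le

theorem sem_update_eq_of_lowerValue (hX : X ∉ G.binders)
    (IH : ∀ (ρ' : ℕ → P → unitInterval) (q : P), (pLmu.sem M G ρ' q : ℝ) =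
      lowerValue (gameArena M G) (gamePri G) (gameR G ρ') (Sum.inl q, G))
    (hf : ∀ p, (f p : ℝ) = lowerValue (gameArena M (.mu X G)) (gamePri (.mu X G))
      (gameR (.mu X G) ρ) (Sum.inl p, G)) :
    pLmu.sem M G (Function.update ρ X f) = f :=
  funext fun q => Subtype.ext <| by rw [IH, lowerValue_gameArena_update M hX ρ hf, hf]

theorem sem_update_eq_of_upperValue (hX : X ∉ G.binders)
    (IH : ∀ (ρ' : ℕ → P → unitInterval) (q : P), (pLmu.sem M G ρ' q : ℝ) =
      upperValue (gameArena M G) (gamePri G) (gameR G ρ') (Sum.inl q, G))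
    (hf : ∀ p, (f p : ℝ) = upperValue (gameArena M (.mu X G)) (gamePri (.mu X G))
      (gameR (.mu X G) ρ) (Sum.inl p, G)) :
    pLmu.sem M G (Function.update ρ X f) = f :=
  funext fun q => Subtype.ext <| by rw [IH, upperValue_gameArena_update M hX ρ hf, hf]

end FixedPoints

theorem mu_case_game_values_are_fixed_points_general {L P : Type}
    (M : PLTS L P) (G₁ : pLmu L) (X : ℕ) (hX : X ∉ G₁.binders)
    (IH : ∀ (ρ' : ℕ → P → unitInterval) (q : P),
      (pLmu.sem M G₁ ρ' q : ℝ) =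
          lowerValue (gameArena M G₁) (gamePri G₁) (gameR G₁ ρ') (Sum.inl q, G₁) ∧
        lowerValue (gameArena M G₁) (gamePri G₁) (gameR G₁ ρ') (Sum.inl q, G₁) =
          upperValue (gameArena M G₁) (gamePri G₁) (gameR G₁ ρ') (Sum.inl q, G₁))
    (ρ : ℕ → P → unitInterval) :
    (∀ p, lowerValue (gameArena M (pLmu.mu X G₁)) (gamePri (pLmu.mu X G₁))
        (gameR (pLmu.mu X G₁) ρ) (Sum.inl p, G₁) ∈ Set.Icc (0:ℝ) 1) ∧
    (∀ p, upperValue (gameArena M (pLmu.mu X G₁)) (gamePri (pLmu.mu X G₁))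
        (gameR (pLmu.mu X G₁) ρ) (Sum.inl p, G₁) ∈ Set.Icc (0:ℝ) 1) ∧
    pLmu.sem M G₁ (Function.update ρ X (fun p => Set.projIcc 0 1 zero_le_one
        (lowerValue (gameArena M (pLmu.mu X G₁)) (gamePri (pLmu.mu X G₁))
          (gameR (pLmu.mu X G₁) ρ) (Sum.inl p, G₁)))) =
      (fun p => Set.projIcc 0 1 zero_le_one
        (lowerValue (gameArena M (pLmu.mu X G₁)) (gamePri (pLmu.mu X G₁))
          (gameR (pLmu.mu X G₁) ρ) (Sum.inl p, G₁))) ∧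
    pLmu.sem M G₁ (Function.update ρ X (fun p => Set.projIcc 0 1 zero_le_one
        (upperValue (gameArena M (pLmu.mu X G₁)) (gamePri (pLmu.mu X G₁))
          (gameR (pLmu.mu X G₁) ρ) (Sum.inl p, G₁)))) =
      (fun p => Set.projIcc 0 1 zero_le_one
        (upperValue (gameArena M (pLmu.mu X G₁)) (gamePri (pLmu.mu X G₁))
          (gameR (pLmu.mu X G₁) ρ) (Sum.inl p, G₁))) ∧
    ∀ p, (pLmu.sem M (pLmu.mu X G₁) ρ p : ℝ) ≤
          lowerValue (gameArena M (pLmu.mu X G₁)) (gamePri (pLmu.mu X G₁))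
            (gameR (pLmu.mu X G₁) ρ) (Sum.inl p, G₁) ∧
        lowerValue (gameArena M (pLmu.mu X G₁)) (gamePri (pLmu.mu X G₁))
            (gameR (pLmu.mu X G₁) ρ) (Sum.inl p, G₁) ≤
          upperValue (gameArena M (pLmu.mu X G₁)) (gamePri (pLmu.mu X G₁))
            (gameR (pLmu.mu X G₁) ρ) (Sum.inl p, G₁) := by
  have lower_mem (p : P) := lowerValue_mem_Icc (pri := gamePri (.mu X G₁)) (s := (Sum.inl p, G₁))
    (wellformed_gameArena M (.mu X G₁)) (gameR_mem_Icc (.mu X G₁) ρ)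
  have upper_mem (p : P) := upperValue_mem_Icc (pri := gamePri (.mu X G₁)) (s := (Sum.inl p, G₁))
    (wellformed_gameArena M (.mu X G₁)) (gameR_mem_Icc (.mu X G₁) ρ)
  have coe_projIcc {x : ℝ} (hx : x ∈ Set.Icc (0 : ℝ) 1) :
      (Set.projIcc 0 1 zero_le_one x : ℝ) = x :=
    congrArg Subtype.val (Set.projIcc_of_mem zero_le_one hx)
  have lower_fixed := sem_update_eq_of_lowerValue hX (fun ρ' q => (IH ρ' q).1)
    fun p => coe_projIcc (lower_mem p)
  have upper_fixed := sem_update_eq_of_upperValue hX (fun ρ' q => (IH ρ' q).1.trans (IH ρ' q).2)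
    fun p => coe_projIcc (upper_mem p)
  refine ⟨lower_mem, upper_mem, lower_fixed, upper_fixed, fun p => ⟨?_,
    lowerValue_le_upperValue (wellformed_gameArena M _) (gameR_mem_Icc _ ρ)⟩⟩
  exact (Subtype.coe_le_coe.2 (sem_mu_le lower_fixed p)).trans_eq (coe_projIcc (lower_mem p))

/-- **Under the inductive hypothesis of the μ-case, the game values of the unfolded
game are fixed points**: assuming the equivalence of denotational and game semantics
for the body `G₁` under every interpretation, the functions
`⦅μX.G₁⦆⋆_ρ : p ↦ Val⋆(𝒢^{μX.G₁}_ρ)(⟨p, G₁⟩)` (for `⋆ ∈ {↓, ↑}`) take values in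
`[0,1]` and, viewed as elements of `P → [0,1]`, are fixed points of the map
`f ↦ ⟦G₁⟧ρ[f/X]`; consequently `⟦μX.G₁⟧ρ(p) ≤ ⦅μX.G₁⦆↓_ρ(p) ≤ ⦅μX.G₁⦆↑_ρ(p)`
for every `p`. -/
theorem mu_case_game_values_are_fixed_points {L P : Type} [Countable L]
    (M : PLTS L P) (G₁ : pLmu L) (X : ℕ) (hF : (pLmu.mu X G₁).NormalForm)
    (IH : ∀ (ρ' : ℕ → P → unitInterval) (q : P),
      (pLmu.sem M G₁ ρ' q : ℝ) =
          lowerValue (gameArena M G₁) (gamePri G₁) (gameR G₁ ρ') (Sum.inl q, G₁) ∧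
        lowerValue (gameArena M G₁) (gamePri G₁) (gameR G₁ ρ') (Sum.inl q, G₁) =
          upperValue (gameArena M G₁) (gamePri G₁) (gameR G₁ ρ') (Sum.inl q, G₁))
    (ρ : ℕ → P → unitInterval) :
    (∀ p, lowerValue (gameArena M (pLmu.mu X G₁)) (gamePri (pLmu.mu X G₁))
        (gameR (pLmu.mu X G₁) ρ) (Sum.inl p, G₁) ∈ Set.Icc (0:ℝ) 1) ∧
    (∀ p, upperValue (gameArena M (pLmu.mu X G₁)) (gamePri (pLmu.mu X G₁))
        (gameR (pLmu.mu X G₁) ρ) (Sum.inl p, G₁) ∈ Set.Icc (0:ℝ) 1) ∧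
    pLmu.sem M G₁ (Function.update ρ X (fun p => Set.projIcc 0 1 zero_le_one
        (lowerValue (gameArena M (pLmu.mu X G₁)) (gamePri (pLmu.mu X G₁))
          (gameR (pLmu.mu X G₁) ρ) (Sum.inl p, G₁)))) =
      (fun p => Set.projIcc 0 1 zero_le_one
        (lowerValue (gameArena M (pLmu.mu X G₁)) (gamePri (pLmu.mu X G₁))
          (gameR (pLmu.mu X G₁) ρ) (Sum.inl p, G₁))) ∧
    pLmu.sem M G₁ (Function.update ρ X (fun p => Set.projIcc 0 1 zero_le_one
        (upperValue (gameArena M (pLmu.mu X G₁)) (gamePri (pLmu.mu X G₁))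
          (gameR (pLmu.mu X G₁) ρ) (Sum.inl p, G₁)))) =
      (fun p => Set.projIcc 0 1 zero_le_one
        (upperValue (gameArena M (pLmu.mu X G₁)) (gamePri (pLmu.mu X G₁))
          (gameR (pLmu.mu X G₁) ρ) (Sum.inl p, G₁))) ∧
    ∀ p, (pLmu.sem M (pLmu.mu X G₁) ρ p : ℝ) ≤
          lowerValue (gameArena M (pLmu.mu X G₁)) (gamePri (pLmu.mu X G₁))
            (gameR (pLmu.mu X G₁) ρ) (Sum.inl p, G₁) ∧
        lowerValue (gameArena M (pLmu.mu X G₁)) (gamePri (pLmu.mu X G₁))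
            (gameR (pLmu.mu X G₁) ρ) (Sum.inl p, G₁) ≤
          upperValue (gameArena M (pLmu.mu X G₁)) (gamePri (pLmu.mu X G₁))
            (gameR (pLmu.mu X G₁) ρ) (Sum.inl p, G₁) := by
  exact mu_case_game_values_are_fixed_points_general M G₁ X (List.nodup_cons.1 hF.1).1 IH ρ
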